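/- arXiv:2604.10682 — 2 statements merged into one kernel-verified Lean document; each statement's English description precedes it below -/
import Mathlib

section
/- Let d ≥ 1 be an integer, σ > −d a real number, and ε ∈ (0,1). Suppose m : ℝ^d × ℝ^d → ℂ is such that for each fixed x ∈ ℝ^d, the map ξ ↦ m(x,ξ) is (d+2)-times continuously differentiable on ℝ^d \ {0} with |∇_ξ^k m(x,ξ)| ≤ |ξ|^{σ−k} for all integers 0 ≤ k ≤ d+2 and all ξ ≠ 0, uniformly in x. Let v : ℝ^d → ℂ be a measurable function with ∫_{ℝ^d} (|ξ|^{σ−ε} + |ξ|^{σ+ε}) |v(ξ)| dξ < ∞, and define T(x) := ∫_{ℝ^d} m(x,ξ) v(ξ) e^{i x·ξ} dξ, Λ₊(x) := ∫_{ℝ^d} |ξ|^{σ+ε} v(ξ) e^{i x·ξ} dξ, Λ₋(x) := ∫_{ℝ^d} |ξ|^{σ−ε} v(ξ) e^{i x·ξ} dξ. Then there is a constant C depending only on d, σ and ε such that sup_x |T(x)| ≤ C (sup_x |Λ₊(x)|)^{1/2} (sup_x |Λ₋(x)|)^{1/2}. -/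
open MeasureTheory Set
open scoped InnerProductSpace

open FourierTransform in
lemma kernel_bound (d : ℕ) : ∃ C : ℝ, 0 < C ∧
    ∀ (h : EuclideanSpace ℝ (Fin d) → ℂ) (B : ℝ), ContDiff ℝ (d + 2) h →
      (∀ ξ, 2 ≤ ‖ξ‖ → h ξ = 0) → 
      (∀ k : ℕ, k ≤ d + 2 → ∀ ξ, ‖iteratedFDeriv ℝ k h ξ‖ ≤ B) → 
      ∀ (w : EuclideanSpace ℝ (Fin d) → ℂ) (M : ℝ), Integrable w →
        (∀ y, ‖∫ ξ, w ξ * Complex.exp ((⟪y, ξ⟫_ℝ : ℂ) * Complex.I)‖ ≤ M) →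
        ∀ x, ‖∫ ξ, h ξ * w ξ * Complex.exp ((⟪x, ξ⟫_ℝ : ℂ) * Complex.I)‖ ≤ C * B * M := by
  set E := EuclideanSpace ℝ (Fin d)
  set V : ℝ := (volume (Metric.closedBall (0:E) 2)).toReal with hV
  set J : ℝ := ∫ y : E, (1 + ‖y‖) ^ (-((d+1 : ℕ) : ℝ)) with hJ
  have hJint : Integrable (fun y : E => (1 + ‖y‖) ^ (-((d+1 : ℕ) : ℝ))) := by
    apply integrable_one_add_norm
    simp [E]
  have hJ0 : 0 ≤ J := integral_nonneg fun y => by positivity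
  have hV0 : 0 ≤ V := ENNReal.toReal_nonneg
  set D : ℝ := 2 ^ (d+1) * (2 ^ (d+1) * ((d + 2) * V)) + 2 ^ (d+1) * V with hD
  have hD0 : 0 ≤ D := by positivity
  refine ⟨D * J + 1, by positivity, ?_⟩
  intro h B hh hsupp hB w M hw hM x
  have hB0 : 0 ≤ B := (norm_nonneg _).trans (hB 0 (by omega) 0)
  have hM0 : 0 ≤ M := (norm_nonneg _).trans (hM 0)
  have hts : tsupport h ⊆ Metric.closedBall (0:E) 2 := by
    refine closure_minimal ?_ Metric.isClosed_closedBall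
    intro ξ hξ
    by_contra hc
    simp only [Metric.mem_closedBall, dist_zero_right, not_le] at hc
    exact hξ (hsupp ξ hc.le)
  have hcs : HasCompactSupport h :=
    HasCompactSupport.intro (isCompact_closedBall (0:E) 2) fun ξ hξ => by
      simp only [Metric.mem_closedBall, dist_zero_right, not_le] at hξ
      exact hsupp ξ hξ.le
  have hDint : ∀ k : ℕ, k ≤ d + 2 → Integrable (fun ξ => ‖iteratedFDeriv ℝ k h ξ‖) := by
    intro k hk
    have h1 : Continuous (iteratedFDeriv ℝ k h) := hh.continuous_iteratedFDeriv (by exact_mod_cast hk)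
    exact (h1.integrable_of_hasCompactSupport (hcs.iteratedFDeriv k)).norm
  have hle : ∀ k : ℕ, k ≤ d + 2 → ∫ ξ, ‖iteratedFDeriv ℝ k h ξ‖ ≤ V * B := by
    intro k hk
    calc ∫ ξ, ‖iteratedFDeriv ℝ k h ξ‖ ≤ ∫ ξ, (Metric.closedBall (0:E) 2).indicator (fun _ => B) ξ := by
          apply integral_mono (hDint k hk)
          · exact (integrable_indicator_iff Metric.isClosed_closedBall.measurableSet).2
              (integrableOn_const (measure_closedBall_lt_top.ne))
          · intro ξ
            by_cases hξ : ξ ∈ Metric.closedBall (0:E) 2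
            · simp only [indicator_of_mem hξ]; exact hB k hk ξ
            · simp only [indicator_of_notMem hξ]
              have : ξ ∉ tsupport (iteratedFDeriv ℝ k h) :=
                fun h' => hξ (hts (tsupport_iteratedFDeriv_subset k h'))
              rw [image_eq_zero_of_notMem_tsupport this]; simp
      _ = V * B := by
          rw [integral_indicator Metric.isClosed_closedBall.measurableSet, setIntegral_const]
          simp [hV, Measure.real]
  have hF : ∀ n : ℕ, n ≤ d + 1 → ∀ y, ‖y‖ ^ n * ‖𝓕 h y‖ ≤ 2 ^ n * ((n+1) * (V * B)) := by
    intro n hn y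
    have := Real.pow_mul_norm_iteratedFDeriv_fourier_le (K := 0) (N := (d+2 : ℕ)) (f := h) 
      (by exact_mod_cast hh) (by
        intro k n hk hn
        simp only [nonpos_iff_eq_zero, Nat.cast_eq_zero] at hk
        have : k = 0 := by exact_mod_cast hk
        subst this
        simpa using hDint n (by exact_mod_cast hn)) (k := 0) (n := n) (by simp)
        (by exact_mod_cast hn.trans (by omega)) y
    simp only [norm_iteratedFDeriv_zero] at this
    refine this.trans ?_
    simp only [pow_zero, zero_add, one_mul, Nat.cast_zero, mul_zero, Finset.range_one,
       Finset.sum_product, Finset.sum_singleton]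
    gcongr
    refine (Finset.sum_le_sum (fun i hi => hle i ?_)).trans ?_
    · simp at hi; omega
    · simp
  have hFb : ∀ y, ‖𝓕 h y‖ ≤ D * B * (1 + ‖y‖) ^ (-((d+1 : ℕ) : ℝ)) := by
    intro y
    rw [Real.rpow_neg (by positivity), Real.rpow_natCast, ← div_eq_mul_inv, le_div_iff₀ (by positivity)]
    have h1 := hF (d+1) le_rfl y
    have h0 := hF 0 (by omega) y
    have h2 : (1 + ‖y‖) ^ (d+1) ≤ 2 ^ (d+1) * (1 + ‖y‖ ^ (d+1)) := by
      have := add_pow_le (zero_le_one (α := ℝ)) (norm_nonneg y) (d+1)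
      simp only [one_pow, Nat.add_sub_cancel] at this
      refine this.trans ?_
      gcongr <;> norm_num
    push_cast at h1 h0
    simp only [pow_zero, one_mul, zero_add] at h0
    calc ‖𝓕 h y‖ * (1 + ‖y‖) ^ (d+1) ≤ ‖𝓕 h y‖ * (2 ^ (d+1) * (1 + ‖y‖ ^ (d+1))) := by gcongr
      _ = 2 ^ (d+1) * (‖𝓕 h y‖ + ‖y‖ ^ (d+1) * ‖𝓕 h y‖) := by ring
      _ ≤ 2 ^ (d+1) * (V * B + 2 ^ (d + 1) * ((d + 1 + 1) * (V * B))) := by gcongr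
      _ = D * B := by rw [hD]; ring
  have hI : Integrable h := hh.continuous.integrable_of_hasCompactSupport hcs
  have hFc : Continuous (𝓕 h) := by
    exact VectorFourier.fourierIntegral_continuous Real.continuous_fourierChar (by exact continuous_inner) hI
  have hFI : Integrable (𝓕 h) := 
    (hJint.const_mul (D * B)).mono' hFc.aestronglyMeasurable (Filter.Eventually.of_forall hFb)
  have hinv := hh.continuous.fourierInv_fourier_eq hI hFI
  have hrep : ∀ ξ, h ξ = ∫ y, 𝓕 h y * Complex.exp ((⟪(2 * Real.pi) • y, ξ⟫_ℝ : ℂ) * Complex.I) := by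
    intro ξ
    conv_lhs => rw [← hinv, Real.fourierInv_eq']
    apply integral_congr_ae
    filter_upwards with y
    simp only [smul_eq_mul, inner_smul_left]
    rw [mul_comm]
    congr 2
  have key : ∫ ξ, h ξ * w ξ * Complex.exp ((⟪x, ξ⟫_ℝ : ℂ) * Complex.I) = 
      ∫ y, 𝓕 h y * ∫ ξ, w ξ * Complex.exp ((⟪x + (2 * Real.pi) • y, ξ⟫_ℝ : ℂ) * Complex.I) := by
    calc _ = ∫ ξ, ∫ y, (𝓕 h y * w ξ) * Complex.exp ((⟪x + (2 * Real.pi) • y, ξ⟫_ℝ : ℂ) * Complex.I) := by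
          apply integral_congr_ae
          filter_upwards with ξ
          rw [hrep ξ, ← integral_mul_const, ← integral_mul_const]
          apply integral_congr_ae
          filter_upwards with y
          simp only [inner_add_left, Complex.ofReal_add, add_mul, Complex.exp_add]
          ring
      _ = ∫ y, ∫ ξ, (𝓕 h y * w ξ) * Complex.exp ((⟪x + (2 * Real.pi) • y, ξ⟫_ℝ : ℂ) * Complex.I) := by
          apply integral_integral_swap
          have hp := (hw.mul_prod hFI)
          refine Integrable.mono hp ?_ ?_
          · refine AEStronglyMeasurable.mul ?_ ?_
            · refine hp.aestronglyMeasurable.congr ?_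
              filter_upwards with p using mul_comm _ _
            · apply Continuous.aestronglyMeasurable
              fun_prop
          · filter_upwards with p
            simp only [Function.uncurry, norm_mul, Complex.norm_exp_ofReal_mul_I, mul_one]
            rw [mul_comm]
      _ = _ := by
          simp_rw [mul_assoc, integral_const_mul]
  rw [key]
  calc _ ≤ ∫ y, D * B * (1 + ‖y‖) ^ (-((d+1 : ℕ) : ℝ)) * M := by
        apply norm_integral_le_of_norm_le ((hJint.const_mul (D * B)).mul_const M)
        filter_upwards with y
        rw [norm_mul]
        exact mul_le_mul (hFb y) (hM _) (norm_nonneg _) (by positivity)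
    _ = D * J * B * M := by rw [integral_mul_const, integral_const_mul]; ring
    _ ≤ (D * J + 1) * B * M := by gcongr; linarith

/-- A smooth cutoff equal to one on the unit ball, vanishing outside the ball of radius two. -/
noncomputable def chiBump (d : ℕ) : ContDiffBump (0 : EuclideanSpace ℝ (Fin d)) :=
  ⟨1, 2, one_pos, one_lt_two⟩

/-- Littlewood-Paley type annular bump. -/
noncomputable def phiBump (d : ℕ) (ξ : EuclideanSpace ℝ (Fin d)) : ℝ :=
  chiBump d ξ - chiBump d ((2:ℝ) • ξ)

lemma chi_one {d : ℕ} {ξ : EuclideanSpace ℝ (Fin d)} (h : ‖ξ‖ ≤ 1) : chiBump d ξ = 1 :=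
  (chiBump d).one_of_mem_closedBall (by simpa [chiBump] using h)

lemma chi_zero {d : ℕ} {ξ : EuclideanSpace ℝ (Fin d)} (h : 2 ≤ ‖ξ‖) : chiBump d ξ = 0 :=
  (chiBump d).zero_of_le_dist (by simpa [chiBump] using h)

lemma phi_contDiff (d : ℕ) {n : ℕ∞} : ContDiff ℝ n (phiBump d) := by
  unfold phiBump
  exact (chiBump d).contDiff.sub ((chiBump d).contDiff.comp (contDiff_const_smul (2:ℝ)))

lemma phi_zero_low {d : ℕ} {ξ : EuclideanSpace ℝ (Fin d)} (h : ‖ξ‖ ≤ 1/2) : phiBump d ξ = 0 := by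
  unfold phiBump
  rw [chi_one (by linarith), chi_one (by rw [norm_smul]; norm_num; linarith), sub_self]

lemma phi_zero_high {d : ℕ} {ξ : EuclideanSpace ℝ (Fin d)} (h : 2 ≤ ‖ξ‖) : phiBump d ξ = 0 := by
  unfold phiBump
  rw [chi_zero h, chi_zero (by rw [norm_smul]; norm_num; linarith), sub_self]

lemma contDiff_of_away {d : ℕ} {n : WithTop ℕ∞} {f : EuclideanSpace ℝ (Fin d) → ℂ}
    (h0 : ∀ ξ, ‖ξ‖ ≤ 1/2 → f ξ = 0) (h1 : ContDiffOn ℝ n f {0}ᶜ) : ContDiff ℝ n f := by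
  rw [contDiff_iff_contDiffAt]
  intro ξ
  by_cases hξ : ξ = 0
  · subst hξ
    refine (contDiffAt_const (c := (0:ℂ))).congr_of_eventuallyEq ?_
    filter_upwards [Metric.ball_mem_nhds (0 : EuclideanSpace ℝ (Fin d)) (by norm_num : (0:ℝ) < 1/2)]
      with y hy
    exact h0 y (by simpa using (le_of_lt (by simpa using hy)))
  · exact h1.contDiffAt (isOpen_compl_singleton.mem_nhds hξ)

lemma rpow_bound {r e a : ℝ} (h1 : 1/2 ≤ r) (h2 : r ≤ 2) (ha : |e| ≤ a) : r ^ e ≤ 2 ^ a := by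
  have hr : 0 < r := by linarith
  have hl : |Real.log r| ≤ Real.log 2 := by
    rw [abs_le]
    constructor
    · have := Real.log_le_log (by norm_num) h1
      rw [one_div, Real.log_inv] at this
      exact this
    · exact Real.log_le_log hr h2
  rw [Real.rpow_def_of_pos hr, Real.rpow_def_of_pos two_pos, Real.exp_le_exp]
  calc Real.log r * e ≤ |Real.log r * e| := le_abs_self _
    _ = |Real.log r| * |e| := abs_mul _ _
    _ ≤ Real.log 2 * a := by gcongr

lemma unit_bound (d : ℕ) (σ s : ℝ) : ∃ C : ℝ, 0 < C ∧
    ∀ (m v : EuclideanSpace ℝ (Fin d) → ℂ), ContDiffOn ℝ (d + 2) m {0}ᶜ →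
      (∀ k : ℕ, k ≤ d + 2 → ∀ ξ : EuclideanSpace ℝ (Fin d), ξ ≠ 0 →
            ‖iteratedFDerivWithin ℝ k m {0}ᶜ ξ‖ ≤ ‖ξ‖ ^ (σ - (k : ℝ))) →
      Integrable (fun ξ => ((‖ξ‖ ^ s : ℝ) : ℂ) * v ξ) → ∀ M : ℝ,
        (∀ y, ‖∫ ξ, ((‖ξ‖ ^ s : ℝ) : ℂ) * v ξ * Complex.exp ((⟪y, ξ⟫_ℝ : ℂ) * Complex.I)‖ ≤ M) →
        ∀ x, ‖∫ ξ, m ξ * (phiBump d ξ : ℂ) * v ξ * Complex.exp ((⟪x, ξ⟫_ℝ : ℂ) * Complex.I)‖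
          ≤ C * M := by
  obtain ⟨C, hC, hker⟩ := kernel_bound d
  set ψ : EuclideanSpace ℝ (Fin d) → ℂ := fun ξ => ((phiBump d ξ * ‖ξ‖ ^ (-s) : ℝ) : ℂ) with hψ
  have hψlow : ∀ ξ, ‖ξ‖ ≤ 1/2 → ψ ξ = 0 := fun ξ h => by simp [hψ, phi_zero_low h]
  have hψhigh : ∀ ξ, 2 ≤ ‖ξ‖ → ψ ξ = 0 := fun ξ h => by simp [hψ, phi_zero_high h]
  have hψc : ContDiff ℝ ((d + 2 : ℕ) : ℕ∞) ψ := by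
    refine contDiff_of_away hψlow ?_
    refine (Complex.ofRealCLM.contDiff).comp_contDiffOn ?_
    refine (phi_contDiff d).contDiffOn.mul ?_
    intro ξ hξ
    exact ((contDiffAt_norm ℝ hξ).rpow_const_of_ne (norm_ne_zero_iff.2 hξ)).contDiffWithinAt
  have hψs : HasCompactSupport ψ :=
    HasCompactSupport.intro (isCompact_closedBall 0 2) fun ξ hξ => by
      simp only [Metric.mem_closedBall, dist_zero_right, not_le] at hξ
      exact hψhigh ξ hξ.le
  have hA : ∀ k : ℕ, ∃ A : ℝ, k ≤ d + 2 → ∀ ξ, ‖iteratedFDeriv ℝ k ψ ξ‖ ≤ A := by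
    intro k
    by_cases hk : k ≤ d + 2
    · have h1 : Continuous (iteratedFDeriv ℝ k ψ) := hψc.continuous_iteratedFDeriv (by exact_mod_cast hk)
      obtain ⟨A, hA⟩ := h1.bounded_above_of_compact_support (hψs.iteratedFDeriv k)
      exact ⟨A, fun _ => hA⟩
    · exact ⟨0, fun h => absurd h hk⟩
  choose A hA using hA
  set A' : ℝ := ∑ k ∈ Finset.range (d + 3), |A k| with hA'
  have hA0 : 0 ≤ A' := Finset.sum_nonneg fun _ _ => abs_nonneg _
  have hAb : ∀ k : ℕ, k ≤ d + 2 → ∀ ξ, ‖iteratedFDeriv ℝ k ψ ξ‖ ≤ A' := by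
    intro k hk ξ
    refine (hA k hk ξ).trans ((le_abs_self _).trans ?_)
    exact Finset.single_le_sum (f := fun k => |A k|) (fun _ _ => abs_nonneg _)
      (Finset.mem_range.2 (by omega))
  set L : ℝ := 2 ^ (|σ| + (d + 2)) with hL
  have hL0 : 0 < L := by positivity
  set B : ℝ := 2 ^ (d+2) * (A' * L) with hBdef
  have hB0 : 0 ≤ B := by positivity
  refine ⟨C * B + 1, by positivity, ?_⟩
  intro m v hm hmb hv M hM x
  have hM0 : 0 ≤ M := (norm_nonneg _).trans (hM 0)
  set h : EuclideanSpace ℝ (Fin d) → ℂ := fun ξ => ψ ξ * m ξ with hh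
  have hhc : ContDiff ℝ (d + 2) h := by
    refine contDiff_of_away (fun ξ hξ => by simp [hh, hψlow ξ hξ]) ?_
    exact (ContDiff.contDiffOn (by exact_mod_cast hψc)).mul hm
  have hhb : ∀ k : ℕ, k ≤ d + 2 → ∀ ξ, ‖iteratedFDeriv ℝ k h ξ‖ ≤ B := by
    intro k hk ξ
    have hzero : h =ᶠ[nhds ξ] 0 → ‖iteratedFDeriv ℝ k h ξ‖ ≤ B := by
      intro he
      rw [(he.iteratedFDeriv ℝ k).eq_of_nhds]
      simpa using hB0
    rcases lt_or_ge ‖ξ‖ (1/2) with h1 | h1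
    · apply hzero
      filter_upwards [(isOpen_lt continuous_norm continuous_const).mem_nhds h1] with y hy
      simp [hh, hψlow y (le_of_lt hy)]
    rcases lt_or_ge 2 ‖ξ‖ with h2 | h2
    · apply hzero
      filter_upwards [(isOpen_lt continuous_const continuous_norm).mem_nhds h2] with y hy
      simp [hh, hψhigh y (le_of_lt hy)]
    have hξ : ξ ≠ 0 := by
      rintro rfl
      norm_num at h1
    have hop : IsOpen ({0}ᶜ : Set (EuclideanSpace ℝ (Fin d))) := isOpen_compl_singleton
    rw [← iteratedFDerivWithin_of_isOpen k hop hξ]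
    refine (norm_iteratedFDerivWithin_mul_le (N := (d + 2 : ℕ)) (ContDiff.contDiffOn (by exact_mod_cast hψc))
      (by exact_mod_cast hm) hop.uniqueDiffOn hξ (by exact_mod_cast hk)).trans ?_
    calc _ ≤ ∑ i ∈ Finset.range (k+1), (k.choose i : ℝ) * (A' * L) := by
          apply Finset.sum_le_sum
          intro i hi
          have hi' : i ≤ k := by simp at hi; omega
          rw [mul_assoc]
          gcongr
          · rw [iteratedFDerivWithin_of_isOpen i hop hξ]
            exact hAb i (by omega) ξ
          · refine (hmb (k - i) (by omega) ξ hξ).trans (rpow_bound h1 h2 ?_)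
            refine (abs_sub _ _).trans ?_
            gcongr
            rw [Nat.abs_cast]
            exact_mod_cast (by omega : k - i ≤ d + 2)
      _ = 2 ^ k * (A' * L) := by
          rw [← Finset.sum_mul]
          congr 1
          exact_mod_cast Nat.sum_range_choose k
      _ ≤ B := by
          rw [hBdef]
          gcongr
          norm_num
  have := hker h B hhc (fun ξ hξ => by simp [hh, hψhigh ξ hξ]) hhb _ M hv hM x
  have he : ∫ ξ, m ξ * (phiBump d ξ : ℂ) * v ξ * Complex.exp ((⟪x, ξ⟫_ℝ : ℂ) * Complex.I) =
      ∫ ξ, h ξ * (((‖ξ‖ ^ s : ℝ) : ℂ) * v ξ) * Complex.exp ((⟪x, ξ⟫_ℝ : ℂ) * Complex.I) := by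
    apply integral_congr_ae
    filter_upwards with ξ
    by_cases hξ : ξ = 0
    · simp [hh, hψlow ξ (by simp [hξ]), phi_zero_low (ξ := ξ) (by simp [hξ])]
    · have : ‖ξ‖ ^ (-s) * ‖ξ‖ ^ s = 1 := by
        rw [← Real.rpow_add (norm_pos_iff.2 hξ)]; simp
      have h2 : ((‖ξ‖ ^ (-s) : ℝ) : ℂ) * ((‖ξ‖ ^ s : ℝ) : ℂ) = 1 := by exact_mod_cast this
      simp only [hh, hψ]
      rw [Complex.ofReal_mul]
      linear_combination (- m ξ * (phiBump d ξ : ℂ) * v ξ * Complex.exp ((⟪x, ξ⟫_ℝ : ℂ) * Complex.I)) * h2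
  rw [he]
  refine this.trans ?_
  gcongr
  linarith

lemma scaled_bound (d : ℕ) (σ s : ℝ) : ∃ C : ℝ, 0 < C ∧
    ∀ (m v : EuclideanSpace ℝ (Fin d) → ℂ), ContDiffOn ℝ (d + 2) m {0}ᶜ →
      (∀ k : ℕ, k ≤ d + 2 → ∀ ξ : EuclideanSpace ℝ (Fin d), ξ ≠ 0 →
            ‖iteratedFDerivWithin ℝ k m {0}ᶜ ξ‖ ≤ ‖ξ‖ ^ (σ - (k : ℝ))) →
      Integrable (fun ξ => ((‖ξ‖ ^ s : ℝ) : ℂ) * v ξ) → ∀ M : ℝ,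
        (∀ y, ‖∫ ξ, ((‖ξ‖ ^ s : ℝ) : ℂ) * v ξ * Complex.exp ((⟪y, ξ⟫_ℝ : ℂ) * Complex.I)‖ ≤ M) →
        ∀ t : ℝ, 0 < t →
        ∀ x, ‖∫ ξ, m ξ * (phiBump d (t⁻¹ • ξ) : ℂ) * v ξ *
            Complex.exp ((⟪x, ξ⟫_ℝ : ℂ) * Complex.I)‖
          ≤ C * t ^ (σ - s) * M := by
  obtain ⟨C, hC, hu⟩ := unit_bound d σ s
  refine ⟨C, hC, ?_⟩
  intro m v hm hmb hv M hM t ht x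
  have htd : 0 < t ^ d := by positivity
  set g : EuclideanSpace ℝ (Fin d) →L[ℝ] EuclideanSpace ℝ (Fin d) :=
    t • ContinuousLinearMap.id ℝ _ with hg
  have hgx : ∀ ξ, g ξ = t • ξ := fun ξ => rfl
  have hpre : g ⁻¹' {0}ᶜ = {0}ᶜ := by
    ext ξ; simp [hgx, ht.ne']
  have hop : IsOpen ({0}ᶜ : Set (EuclideanSpace ℝ (Fin d))) := isOpen_compl_singleton
  have hmg : ContDiffOn ℝ (d + 2) (m ∘ g) {0}ᶜ := by
    have := hm.comp_continuousLinearMap g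
    rwa [hpre] at this
  have key := hu (fun η => ((t ^ (-σ) : ℝ) : ℂ) • (m ∘ g) η) (fun η => v (t • η)) ?_ ?_ ?_
    ((t ^ d)⁻¹ * t ^ (-s) * M) ?_ (t • x)
  · have he := Measure.integral_comp_smul_of_nonneg (volume : Measure (EuclideanSpace ℝ (Fin d)))
      (fun ξ => m ξ * (phiBump d (t⁻¹ • ξ) : ℂ) * v ξ *
            Complex.exp ((⟪x, ξ⟫_ℝ : ℂ) * Complex.I)) t (hR := ht.le)
    have he2 : ∫ ξ, m ξ * (phiBump d (t⁻¹ • ξ) : ℂ) * v ξ * Complex.exp ((⟪x, ξ⟫_ℝ : ℂ) * Complex.I)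
       = ((t ^ d * t ^ σ : ℝ) : ℂ) * ∫ ξ, ((t ^ (-σ) : ℝ) : ℂ) • (m ∘ g) ξ * (phiBump d ξ : ℂ) * v (t • ξ) * Complex.exp ((⟪t • x, ξ⟫_ℝ : ℂ) * Complex.I) := by
      have hone : ((t ^ σ : ℝ) : ℂ) * ((t ^ (-σ) : ℝ) : ℂ) = 1 := by
        rw [← Complex.ofReal_mul, ← Real.rpow_add ht]; simp
      have : ∫ ξ, ((t ^ (-σ) : ℝ) : ℂ) • (m ∘ g) ξ * (phiBump d ξ : ℂ) * v (t • ξ) * Complex.exp ((⟪t • x, ξ⟫_ℝ : ℂ) * Complex.I) = ((t ^ (-σ) : ℝ) : ℂ) * ∫ ξ, (fun ξ => m ξ * (phiBump d (t⁻¹ • ξ) : ℂ) * v ξ *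
            Complex.exp ((⟪x, ξ⟫_ℝ : ℂ) * Complex.I)) (t • ξ) := by
        rw [← integral_const_mul]
        apply integral_congr_ae
        filter_upwards with ξ
        simp only [Function.comp, hgx, smul_eq_mul, smul_smul, inv_mul_cancel₀ ht.ne', one_smul,
          inner_smul_left, inner_smul_right]
        simp only [conj_trivial]
        ring
      rw [this, he, finrank_euclideanSpace_fin, Complex.real_smul, Complex.ofReal_mul]
      have h3 : ((t ^ d : ℝ) : ℂ) * (((t ^ d)⁻¹ : ℝ) : ℂ) = 1 := by
        rw [← Complex.ofReal_mul, mul_inv_cancel₀ htd.ne']; simp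
      generalize (∫ ξ, m ξ * (phiBump d (t⁻¹ • ξ) : ℂ) * v ξ * Complex.exp ((⟪x, ξ⟫_ℝ : ℂ) * Complex.I)) = Z
      calc Z = (((t ^ d : ℝ) : ℂ) * (((t ^ d)⁻¹ : ℝ) : ℂ)) * (((t ^ σ : ℝ) : ℂ) * ((t ^ (-σ) : ℝ) : ℂ)) * Z := by
            rw [h3, hone]; ring
        _ = _ := by ring
    rw [he2, norm_mul, Complex.norm_real, Real.norm_of_nonneg (by positivity)]
    calc _ ≤ t ^ d * t ^ σ * (C * ((t ^ d)⁻¹ * t ^ (-s) * M)) := by gcongr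
      _ = (t ^ d * (t ^ d)⁻¹) * (C * (t ^ σ * t ^ (-s)) * M) := by ring
      _ = _ := by rw [mul_inv_cancel₀ htd.ne', ← Real.rpow_add ht, one_mul, sub_eq_add_neg]
  · exact hmg.const_smul (((t ^ (-σ) : ℝ) : ℂ))
  · intro k hk ξ hξ
    have hξ' : ξ ∈ ({0}ᶜ : Set (EuclideanSpace ℝ (Fin d))) := hξ
    have hgξ : g ξ ≠ 0 := by simp [hgx, ht.ne', hξ]
    have hk' : ((k : ℕ) : WithTop ℕ∞) ≤ d + 2 := by exact_mod_cast hk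
    have e1 := iteratedFDerivWithin_const_smul_apply (a := ((t ^ (-σ) : ℝ) : ℂ)) 
       ((hmg ξ hξ').of_le hk') hop.uniqueDiffOn hξ'
    have e2 := g.iteratedFDerivWithin_comp_right hm hop.uniqueDiffOn (by rw [hpre]; exact hop.uniqueDiffOn) (x := ξ) hgξ hk'
    rw [hpre] at e2
    have e1' : iteratedFDerivWithin ℝ k (fun η => ((t ^ (-σ) : ℝ) : ℂ) • (m ∘ g) η) {0}ᶜ ξ = _ := e1
    rw [e1', norm_smul, e2, Complex.norm_real, Real.norm_of_nonneg (by positivity)]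
    have hgn : ‖g‖ ≤ t := by
      refine ContinuousLinearMap.opNorm_le_bound _ ht.le fun y => ?_
      rw [hgx, norm_smul, Real.norm_of_nonneg ht.le]
    calc _ ≤ t ^ (-σ) * (‖t • ξ‖ ^ (σ - k) * t ^ k) := by
          gcongr
          refine (ContinuousMultilinearMap.norm_compContinuousLinearMap_le _ _).trans ?_
          simp only [Finset.prod_const, Finset.card_univ, Fintype.card_fin]
          gcongr
          exact hmb k hk (g ξ) hgξ
      _ = (t ^ (-σ) * t ^ (σ - k) * t ^ (k : ℝ)) * ‖ξ‖ ^ (σ - k) := by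
          rw [norm_smul, Real.norm_of_nonneg ht.le, Real.mul_rpow ht.le (norm_nonneg _), Real.rpow_natCast]
          ring
      _ = ‖ξ‖ ^ (σ - k) := by
          rw [← Real.rpow_add ht, ← Real.rpow_add ht]
          rw [show -σ + (σ - k) + k = 0 by ring, Real.rpow_zero, one_mul]
  · have h1 := (hv.comp_smul ht.ne').const_mul ((t ^ (-s) : ℝ) : ℂ)
    refine h1.congr ?_
    filter_upwards with ξ
    have hone : ((t ^ (-s) : ℝ) : ℂ) * ((t ^ s : ℝ) : ℂ) = 1 := by
      rw [← Complex.ofReal_mul, ← Real.rpow_add ht]; simp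
    rw [norm_smul, Real.norm_of_nonneg ht.le, Real.mul_rpow ht.le (norm_nonneg _), Complex.ofReal_mul]
    linear_combination (((‖ξ‖ ^ s : ℝ) : ℂ) * v (t • ξ)) * hone
  · intro y
    have hone : ((t ^ (-s) : ℝ) : ℂ) * ((t ^ s : ℝ) : ℂ) = 1 := by
      rw [← Complex.ofReal_mul, ← Real.rpow_add ht]; simp
    have he := Measure.integral_comp_smul_of_nonneg (volume : Measure (EuclideanSpace ℝ (Fin d)))
      (fun ξ => ((‖ξ‖ ^ s : ℝ) : ℂ) * v ξ * Complex.exp ((⟪t⁻¹ • y, ξ⟫_ℝ : ℂ) * Complex.I)) t (hR := ht.le)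
    have he2 : ∫ ξ, ((‖ξ‖ ^ s : ℝ) : ℂ) * v (t • ξ) * Complex.exp ((⟪y, ξ⟫_ℝ : ℂ) * Complex.I)
        = ((t ^ (-s) : ℝ) : ℂ) * ∫ ξ, (fun ξ => ((‖ξ‖ ^ s : ℝ) : ℂ) * v ξ * Complex.exp ((⟪t⁻¹ • y, ξ⟫_ℝ : ℂ) * Complex.I)) (t • ξ) := by
      rw [← integral_const_mul]
      apply integral_congr_ae
      filter_upwards with ξ
      have hi : ⟪t⁻¹ • y, t • ξ⟫_ℝ = ⟪y, ξ⟫_ℝ := by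
        rw [inner_smul_left, inner_smul_right]
        simp [ht.ne']
      rw [hi, norm_smul, Real.norm_of_nonneg ht.le, Real.mul_rpow ht.le (norm_nonneg _), Complex.ofReal_mul]
      linear_combination (-((‖ξ‖ ^ s : ℝ) : ℂ) * v (t • ξ) * Complex.exp ((⟪y, ξ⟫_ℝ : ℂ) * Complex.I)) * hone
    rw [he2, he, norm_mul, norm_smul, Complex.norm_real, Real.norm_of_nonneg (by positivity),
      Real.norm_of_nonneg (by positivity), finrank_euclideanSpace_fin]
    calc _ ≤ t ^ (-s) * ((t ^ d)⁻¹ * M) := by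
          gcongr
          exact hM _
      _ = _ := by ring

lemma optimize {X K a b : ℝ} (hK : 0 ≤ K) (ha : 0 ≤ a) (hb : 0 ≤ b)
    (h : ∀ r : ℝ, 0 < r → X ≤ K * (r⁻¹ * a + r * b)) : X ≤ 2 * K * Real.sqrt a * Real.sqrt b := by
  have h1 : ∀ δ : ℝ, 0 < δ → X ≤ 2 * K * Real.sqrt (a + δ) * Real.sqrt (b + δ) := by
    intro δ hδ
    have p : 0 < Real.sqrt (a + δ) := Real.sqrt_pos.2 (by linarith)
    have q : 0 < Real.sqrt (b + δ) := Real.sqrt_pos.2 (by linarith)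
    have p2 : Real.sqrt (a + δ) ^ 2 = a + δ := Real.sq_sqrt (by linarith)
    have q2 : Real.sqrt (b + δ) ^ 2 = b + δ := Real.sq_sqrt (by linarith)
    set P := Real.sqrt (a + δ)
    set Q := Real.sqrt (b + δ)
    refine (h (P / Q) (by positivity)).trans ?_
    have : (P / Q)⁻¹ * a + P / Q * b ≤ (P / Q)⁻¹ * P ^ 2 + P / Q * Q ^ 2 := by
      gcongr <;> linarith
    calc _ ≤ K * ((P / Q)⁻¹ * P ^ 2 + P / Q * Q ^ 2) := by gcongr
      _ = _ := by field_simp; ring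
  have hc : ContinuousWithinAt (fun δ : ℝ => 2 * K * Real.sqrt (a + δ) * Real.sqrt (b + δ)) (Ioi 0) 0 := by
    apply Continuous.continuousWithinAt
    fun_prop
  have ht := hc.tendsto
  simp only [add_zero] at ht
  refine ge_of_tendsto ht ?_
  filter_upwards [self_mem_nhdsWithin] with δ hδ using h1 δ hδ

/-- Interpolation bound for a variable-coefficient pseudo-differential
operator with symbol `m(x,ξ)` of order `σ`:
`‖𝒯f‖_∞ ≲ ‖Λ^{σ+ε}f‖_∞^{1/2} ‖Λ^{σ−ε}f‖_∞^{1/2}`. -/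
theorem pseudodifferential_interpolation_bound
    (d : ℕ) (hd : 1 ≤ d) (σ ε : ℝ) (hσ : -(d : ℝ) < σ) (hε : 0 < ε) (hε1 : ε < 1) :
    ∃ C : ℝ, 0 < C ∧
      ∀ (m : EuclideanSpace ℝ (Fin d) → EuclideanSpace ℝ (Fin d) → ℂ)
        (v : EuclideanSpace ℝ (Fin d) → ℂ),
        (∀ x : EuclideanSpace ℝ (Fin d), ContDiffOn ℝ (d + 2) (m x) {0}ᶜ) →
        (∀ x : EuclideanSpace ℝ (Fin d), ∀ k : ℕ, k ≤ d + 2 →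
          ∀ ξ : EuclideanSpace ℝ (Fin d), ξ ≠ 0 →
            ‖iteratedFDerivWithin ℝ k (m x) {0}ᶜ ξ‖ ≤ ‖ξ‖ ^ (σ - (k : ℝ))) →
        Measurable v →
        Integrable (fun ξ : EuclideanSpace ℝ (Fin d) =>
          (‖ξ‖ ^ (σ - ε) + ‖ξ‖ ^ (σ + ε)) * ‖v ξ‖) →
        ∀ Mp Mm : ℝ,
          (∀ x : EuclideanSpace ℝ (Fin d),
            ‖∫ ξ : EuclideanSpace ℝ (Fin d),
                ((‖ξ‖ ^ (σ + ε) : ℝ) : ℂ) * v ξ * Complex.exp ((⟪x, ξ⟫_ℝ : ℂ) * Complex.I)‖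
              ≤ Mp) →
          (∀ x : EuclideanSpace ℝ (Fin d),
            ‖∫ ξ : EuclideanSpace ℝ (Fin d),
                ((‖ξ‖ ^ (σ - ε) : ℝ) : ℂ) * v ξ * Complex.exp ((⟪x, ξ⟫_ℝ : ℂ) * Complex.I)‖
              ≤ Mm) →
          ∀ x : EuclideanSpace ℝ (Fin d),
            ‖∫ ξ : EuclideanSpace ℝ (Fin d),
                m x ξ * v ξ * Complex.exp ((⟪x, ξ⟫_ℝ : ℂ) * Complex.I)‖ ≤
              C * Real.sqrt Mp * Real.sqrt Mm := by
  obtain ⟨C1, hC1, h1⟩ := scaled_bound d σ (σ + ε)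
  obtain ⟨C2, hC2, h2⟩ := scaled_bound d σ (σ - ε)
  set q : ℝ := 2 ^ (-ε) with hq
  have hq0 : 0 < q := by positivity
  have hq1 : q < 1 := Real.rpow_lt_one_of_one_lt_of_neg one_lt_two (by linarith)
  have hq1' : 0 < 1 - q := by linarith
  set K : ℝ := (C1 + C2) * (1 - q)⁻¹ with hK
  have hK0 : 0 < K := by positivity
  refine ⟨2 * K, by positivity, ?_⟩
  intro m v hm hmb hvm hvi Mp Mm hMp hMm x
  have hMp0 : 0 ≤ Mp := (norm_nonneg _).trans (hMp 0)
  have hMm0 : 0 ≤ Mm := (norm_nonneg _).trans (hMm 0)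
  have hip : Integrable (fun ξ : EuclideanSpace ℝ (Fin d) => ((‖ξ‖ ^ (σ + ε) : ℝ) : ℂ) * v ξ) := by
    refine hvi.mono' (by fun_prop) ?_
    filter_upwards with ξ
    rw [norm_mul, Complex.norm_real, Real.norm_of_nonneg (by positivity)]
    gcongr
    have : 0 ≤ ‖ξ‖ ^ (σ - ε) := by positivity
    linarith
  have him : Integrable (fun ξ : EuclideanSpace ℝ (Fin d) => ((‖ξ‖ ^ (σ - ε) : ℝ) : ℂ) * v ξ) := by
    refine hvi.mono' (by fun_prop) ?_
    filter_upwards with ξ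
    rw [norm_mul, Complex.norm_real, Real.norm_of_nonneg (by positivity)]
    gcongr
    have : 0 ≤ ‖ξ‖ ^ (σ + ε) := by positivity
    linarith
  have hne : Nonempty (Fin d) := ⟨⟨0, hd⟩⟩
  have hae : ∀ᵐ ξ : EuclideanSpace ℝ (Fin d), ξ ≠ 0 := by
    have : ({0}ᶜ : Set (EuclideanSpace ℝ (Fin d))) ∈ ae volume := 
      compl_mem_ae_iff.2 (measure_singleton 0)
    exact this
  have hmm : AEStronglyMeasurable (m x) volume := by
    have h := (hm x).continuousOn.aestronglyMeasurable (μ := volume) 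
      (isOpen_compl_singleton (x := (0 : EuclideanSpace ℝ (Fin d)))).measurableSet
    rwa [Measure.restrict_eq_self_of_ae_mem (s := ({0}ᶜ : Set (EuclideanSpace ℝ (Fin d)))) hae] at h
  set G : EuclideanSpace ℝ (Fin d) → ℂ := fun ξ => m x ξ * v ξ * Complex.exp ((⟪x, ξ⟫_ℝ : ℂ) * Complex.I) with hG
  have hGm : AEStronglyMeasurable G volume := by
    refine (hmm.mul hvm.aestronglyMeasurable).mul ?_
    apply Continuous.aestronglyMeasurable
    fun_prop
  have hGb : ∀ᵐ ξ : EuclideanSpace ℝ (Fin d), ‖G ξ‖ ≤ (‖ξ‖ ^ (σ - ε) + ‖ξ‖ ^ (σ + ε)) * ‖v ξ‖ := by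
    filter_upwards [hae] with ξ hξ
    have hb := hmb x 0 (by omega) ξ hξ
    rw [norm_iteratedFDerivWithin_zero] at hb
    simp only [hG, norm_mul, Complex.norm_exp_ofReal_mul_I, mul_one]
    gcongr
    refine hb.trans ?_
    have hp : 0 < ‖ξ‖ := norm_pos_iff.2 hξ
    have hz1 : 0 ≤ ‖ξ‖ ^ (σ - ε) := by positivity
    have hz2 : 0 ≤ ‖ξ‖ ^ (σ + ε) := by positivity
    rcases le_total ‖ξ‖ 1 with hl | hl
    · have := Real.rpow_le_rpow_of_exponent_ge hp hl (show σ - ε ≤ σ - ((0:ℕ):ℝ) by push_cast; linarith)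
      linarith
    · have := Real.rpow_le_rpow_of_exponent_le hl (show σ - ((0:ℕ):ℝ) ≤ σ + ε by push_cast; linarith)
      linarith
  have hGi : Integrable G := hvi.mono' hGm hGb
  have hchi_cont : Continuous (chiBump d) := (chiBump d).continuous
  have hchi_le : ∀ ξ, ‖((chiBump d ξ : ℝ) : ℂ)‖ ≤ 1 := by
    intro ξ
    rw [Complex.norm_real, Real.norm_of_nonneg (chiBump d).nonneg]
    exact (chiBump d).le_one
  have hGchi : ∀ c : ℝ, Integrable (fun ξ => ((chiBump d (c • ξ) : ℝ) : ℂ) * G ξ) := by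
    intro c
    refine hGi.norm.mono' (AEStronglyMeasurable.mul ?_ hGm) ?_
    · apply Continuous.aestronglyMeasurable
      fun_prop
    · filter_upwards with ξ
      rw [norm_mul]
      exact mul_le_of_le_one_left (norm_nonneg _) (hchi_le _)
  set S : ℝ → ℂ := fun c => ∫ ξ, ((chiBump d (c • ξ) : ℝ) : ℂ) * G ξ with hS
  have hdiff : ∀ t : ℝ, 0 < t → S t⁻¹ - S (2 * t⁻¹) = 
      ∫ ξ, m x ξ * (phiBump d (t⁻¹ • ξ) : ℂ) * v ξ * Complex.exp ((⟪x, ξ⟫_ℝ : ℂ) * Complex.I) := by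
    intro t ht
    rw [hS]
    simp only
    rw [← integral_sub (hGchi _) (hGchi _)]
    apply integral_congr_ae
    filter_upwards with ξ
    simp only [hG, phiBump, smul_smul, Complex.ofReal_sub]
    ring
  have hb1 : ∀ t : ℝ, 0 < t → ‖S t⁻¹ - S (2 * t⁻¹)‖ ≤ C1 * t ^ (-ε) * Mp := by
    intro t ht
    rw [hdiff t ht]
    have := h1 (m x) v (hm x) (hmb x) hip Mp hMp t ht x
    rwa [show σ - (σ + ε) = -ε by ring] at this
  have hb2 : ∀ t : ℝ, 0 < t → ‖S t⁻¹ - S (2 * t⁻¹)‖ ≤ C2 * t ^ ε * Mm := by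
    intro t ht
    rw [hdiff t ht]
    have := h2 (m x) v (hm x) (hmb x) him Mm hMm t ht x
    rwa [show σ - (σ - ε) = ε by ring] at this
  have hgeo : ∀ N : ℕ, ∑ j ∈ Finset.range N, q ^ j ≤ (1 - q)⁻¹ := by
    intro N
    rw [← tsum_geometric_of_lt_one hq0.le hq1]
    exact (summable_geometric_of_lt_one hq0.le hq1).sum_le_tsum _ (fun _ _ => by positivity)
  have hqj : ∀ j : ℕ, ((2:ℝ) ^ j) ^ (-ε) = q ^ j := by
    intro j
    rw [hq, ← Real.rpow_natCast, ← Real.rpow_natCast, ← Real.rpow_mul (by norm_num), ← Real.rpow_mul (by norm_num), mul_comm]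
  have hR : ∀ R : ℝ, 0 < R → ‖∫ ξ, G ξ‖ ≤ K * (R ^ (-ε) * Mp + R ^ ε * Mm) := by
    intro R hR
    have hbound : ∀ N : ℕ, ‖S ((2 ^ N)⁻¹ * R⁻¹) - S (2 ^ N * R⁻¹)‖ ≤ K * (R ^ (-ε) * Mp + R ^ ε * Mm) := by
      intro N
      have s1 : S ((2 ^ N)⁻¹ * R⁻¹) - S R⁻¹ = ∑ j ∈ Finset.range N, (S ((2 ^ (j+1))⁻¹ * R⁻¹) - S ((2 ^ j)⁻¹ * R⁻¹)) := by
        rw [Finset.sum_range_sub (fun j => S ((2 ^ j)⁻¹ * R⁻¹))]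
        simp
      have s2 : S (2 ^ N * R⁻¹) - S R⁻¹ = ∑ j ∈ Finset.range N, (S (2 ^ (j+1) * R⁻¹) - S (2 ^ j * R⁻¹)) := by
        rw [Finset.sum_range_sub (fun j => S (2 ^ j * R⁻¹))]
        simp
      have n1 : ‖S ((2 ^ N)⁻¹ * R⁻¹) - S R⁻¹‖ ≤ C1 * (1 - q)⁻¹ * (R ^ (-ε) * Mp) := by
        rw [s1]
        calc _ ≤ ∑ j ∈ Finset.range N, C1 * (R ^ (-ε) * Mp) * q ^ j := by
              refine norm_sum_le_of_le _ fun j _ => ?_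
              have := hb1 (2 ^ (j+1) * R) (by positivity)
              rw [mul_inv, ← mul_assoc, show (2:ℝ) * (2 ^ (j+1))⁻¹ = (2 ^ j)⁻¹ by rw [pow_succ]; field_simp,
                Real.mul_rpow (by positivity) hR.le, hqj] at this
              refine this.trans ?_
              have hqq : q ^ (j+1) ≤ q ^ j := pow_le_pow_of_le_one hq0.le hq1.le (by omega)
              calc C1 * (q ^ (j+1) * R ^ (-ε)) * Mp ≤ C1 * (q ^ j * R ^ (-ε)) * Mp := by gcongr
                _ = _ := by ring
          _ = C1 * (R ^ (-ε) * Mp) * ∑ j ∈ Finset.range N, q ^ j := by rw [Finset.mul_sum]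
          _ ≤ C1 * (R ^ (-ε) * Mp) * (1 - q)⁻¹ := by gcongr; exact hgeo N
          _ = _ := by ring
      have n2 : ‖S (2 ^ N * R⁻¹) - S R⁻¹‖ ≤ C2 * (1 - q)⁻¹ * (R ^ ε * Mm) := by
        rw [s2]
        calc _ ≤ ∑ j ∈ Finset.range N, C2 * (R ^ ε * Mm) * q ^ j := by
              refine norm_sum_le_of_le _ fun j _ => ?_
              have := hb2 ((2 ^ j)⁻¹ * R) (by positivity)
              rw [mul_inv, inv_inv, ← mul_assoc, ← pow_succ', Real.mul_rpow (by positivity) hR.le, 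
                Real.inv_rpow (by positivity), ← Real.rpow_neg (by positivity), hqj, norm_sub_rev] at this
              refine this.trans (le_of_eq ?_)
              ring
          _ = C2 * (R ^ ε * Mm) * ∑ j ∈ Finset.range N, q ^ j := by rw [Finset.mul_sum]
          _ ≤ C2 * (R ^ ε * Mm) * (1 - q)⁻¹ := by gcongr; exact hgeo N
          _ = _ := by ring
      calc _ = ‖(S ((2 ^ N)⁻¹ * R⁻¹) - S R⁻¹) - (S (2 ^ N * R⁻¹) - S R⁻¹)‖ := by congr 1; ring
        _ ≤ C1 * (1 - q)⁻¹ * (R ^ (-ε) * Mp) + C2 * (1 - q)⁻¹ * (R ^ ε * Mm) := 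
            (norm_sub_le _ _).trans (add_le_add n1 n2)
        _ ≤ K * (R ^ (-ε) * Mp) + K * (R ^ ε * Mm) := by
            rw [hK]
            gcongr <;> linarith
        _ = _ := by ring
    have hpow : Filter.Tendsto (fun N : ℕ => (2:ℝ) ^ N) Filter.atTop Filter.atTop :=
      tendsto_pow_atTop_atTop_of_one_lt one_lt_two
    have ht1 : Filter.Tendsto (fun N : ℕ => S ((2 ^ N)⁻¹ * R⁻¹)) Filter.atTop (nhds (∫ ξ, G ξ)) := by
      apply tendsto_integral_of_dominated_convergence (fun ξ => ‖G ξ‖) 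
        (fun N => (hGchi _).aestronglyMeasurable) hGi.norm
      · intro N
        filter_upwards with ξ
        rw [norm_mul]
        exact mul_le_of_le_one_left (norm_nonneg _) (hchi_le _)
      · filter_upwards with ξ
        apply tendsto_const_nhds.congr'
        filter_upwards [hpow.eventually_ge_atTop (R⁻¹ * ‖ξ‖)] with N hN
        rw [chi_one]
        · simp
        · rw [norm_smul, Real.norm_of_nonneg (by positivity), mul_assoc]
          exact inv_mul_le_one_of_le₀ hN (by positivity)
    have ht2 : Filter.Tendsto (fun N : ℕ => S (2 ^ N * R⁻¹)) Filter.atTop (nhds 0) := by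
      have : Filter.Tendsto (fun N : ℕ => S (2 ^ N * R⁻¹)) Filter.atTop (nhds (∫ ξ : EuclideanSpace ℝ (Fin d), (0:ℂ))) := by
        apply tendsto_integral_of_dominated_convergence (fun ξ => ‖G ξ‖) 
          (fun N => (hGchi _).aestronglyMeasurable) hGi.norm
        · intro N
          filter_upwards with ξ
          rw [norm_mul]
          exact mul_le_of_le_one_left (norm_nonneg _) (hchi_le _)
        · filter_upwards [hae] with ξ hξ
          have hp : 0 < ‖ξ‖ := norm_pos_iff.2 hξ
          apply tendsto_const_nhds.congr'
          filter_upwards [hpow.eventually_ge_atTop (2 / (R⁻¹ * ‖ξ‖))] with N hN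
          rw [chi_zero]
          · simp
          · rw [norm_smul, Real.norm_of_nonneg (by positivity), mul_assoc]
            exact (div_le_iff₀ (by positivity)).1 hN
      simpa using this
    have ht := (ht1.sub ht2).norm
    rw [sub_zero] at ht
    exact le_of_tendsto' ht hbound
  apply optimize hK0.le hMp0 hMm0
  intro r hr
  have := hR (r ^ ε⁻¹) (by positivity)
  rwa [← Real.rpow_mul hr.le, ← Real.rpow_mul hr.le, mul_neg, inv_mul_cancel₀ hε.ne', Real.rpow_one, Real.rpow_neg_one] at this
end

section
/- Let κ ∈ (0,1) and C_G ≥ 0. Let G : {(θ,η) ∈ ℝ² × ℝ² : θ ≠ η} → ℝ be continuously differentiable in each variable with continuous mixed derivative ∇_θ∇_η G, satisfying |G(θ,η)| + |θ−η|·(|∇_θ G(θ,η)| + |∇_η G(θ,η)|) + |θ−η|²·|∇_θ∇_η G(θ,η)| ≤ C_G / |θ−η| for all θ ≠ η. For f : ℝ² → ℝ² continuously differentiable with compact support, define 𝓜f(θ) := ∫_{ℝ²} G(θ,η) · div f(η) dη. Then there is a constant C depending only on κ such that [𝓜f]_{Ċ^κ} ≤ C · C_G · [f]_{Ċ^κ}.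 -/
open MeasureTheory Set

section HolderHelpers

local notation "E2" => EuclideanSpace ℝ (Fin 2)

lemma radial_near (s : ℝ) (hs : -2 < s) :
    ∃ N : ℝ, 0 < N ∧ ∀ (x0 : E2) (ρ : ℝ), 0 < ρ →
      Integrable (fun x : E2 => (Iio ρ).indicator (fun y : ℝ => y ^ s) ‖x - x0‖) ∧
      ∫ x : E2, (Iio ρ).indicator (fun y : ℝ => y ^ s) ‖x - x0‖ = N * ρ ^ (s + 2) := by
  have hv : 0 < (volume : Measure E2).real (Metric.ball 0 1) :=
    ENNReal.toReal_pos (Metric.measure_ball_pos _ _ one_pos).ne' measure_ball_lt_top.ne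
  refine ⟨2 * (volume : Measure E2).real (Metric.ball 0 1) / (s + 2),
    div_pos (by positivity) (by linarith), fun x0 ρ hρ => ?_⟩
  have hcongr : EqOn (fun y : ℝ => y ^ (Module.finrank ℝ E2 - 1) •
      (Iio ρ).indicator (fun y : ℝ => y ^ s) y)
      ((Iio ρ).indicator (fun y : ℝ => y ^ (s + 1))) (Ioi 0) := by
    intro y hy
    have hy : 0 < y := hy
    by_cases h : y < ρ
    · simp [indicator, h, Real.rpow_add_one hy.ne', mul_comm]
    · simp [indicator, h]
  have hI : IntervalIntegrable (fun y : ℝ => y ^ (s + 1)) volume 0 ρ :=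
    intervalIntegral.intervalIntegrable_rpow' (by linarith)
  constructor
  · have : Integrable (fun x : E2 => (Iio ρ).indicator (fun y : ℝ => y ^ s) ‖x‖) := by
      rw [integrable_fun_norm_addHaar volume (f := (Iio ρ).indicator (fun y : ℝ => y ^ s)),
        integrableOn_congr_fun hcongr measurableSet_Ioi, integrableOn_indicator_iff measurableSet_Iio,
        Iio_inter_Ioi]
      exact ((intervalIntegrable_iff_integrableOn_Ioc_of_le hρ.le).1 hI).mono_set Ioo_subset_Ioc_self
    exact this.comp_sub_right x0
  · rw [integral_sub_right_eq_self (fun x : E2 => (Iio ρ).indicator (fun y : ℝ => y ^ s) ‖x‖) x0,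
      integral_fun_norm_addHaar volume (fun y => (Iio ρ).indicator (fun y : ℝ => y ^ s) y),
      setIntegral_congr_fun measurableSet_Ioi hcongr, setIntegral_indicator measurableSet_Iio,
      Ioi_inter_Iio, ← integral_Ioc_eq_integral_Ioo, ← intervalIntegral.integral_of_le hρ.le,
      integral_rpow (Or.inl (by linarith)), Real.zero_rpow (by linarith)]
    simp
    rw [show s + 1 + 1 = s + 2 by ring]
    ring

lemma radial_far (s : ℝ) (hs : s < -2) :
    ∃ N : ℝ, 0 < N ∧ ∀ (x0 : E2) (ρ : ℝ), 0 < ρ →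
      Integrable (fun x : E2 => (Ioi ρ).indicator (fun y : ℝ => y ^ s) ‖x - x0‖) ∧
      ∫ x : E2, (Ioi ρ).indicator (fun y : ℝ => y ^ s) ‖x - x0‖ = N * ρ ^ (s + 2) := by
  have hv : 0 < (volume : Measure E2).real (Metric.ball 0 1) :=
    ENNReal.toReal_pos (Metric.measure_ball_pos _ _ one_pos).ne' measure_ball_lt_top.ne
  refine ⟨2 * (volume : Measure E2).real (Metric.ball 0 1) / (-(s + 2)),
    div_pos (by positivity) (by linarith), fun x0 ρ hρ => ?_⟩
  have hcongr : EqOn (fun y : ℝ => y ^ (Module.finrank ℝ E2 - 1) •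
      (Ioi ρ).indicator (fun y : ℝ => y ^ s) y)
      ((Ioi ρ).indicator (fun y : ℝ => y ^ (s + 1))) (Ioi 0) := by
    intro y hy
    have hy : 0 < y := hy
    by_cases h : ρ < y
    · simp [indicator, h, Real.rpow_add_one hy.ne', mul_comm]
    · simp [indicator, h]
  have hI := integrableOn_Ioi_rpow_of_lt (a := s + 1) (by linarith) hρ
  have hinter : Ioi ρ ∩ Ioi 0 = Ioi ρ := by
    rw [Ioi_inter_Ioi, sup_eq_left.2 hρ.le]
  constructor
  · have : Integrable (fun x : E2 => (Ioi ρ).indicator (fun y : ℝ => y ^ s) ‖x‖) := by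
      rw [integrable_fun_norm_addHaar volume (f := (Ioi ρ).indicator (fun y : ℝ => y ^ s)),
        integrableOn_congr_fun hcongr measurableSet_Ioi, integrableOn_indicator_iff measurableSet_Ioi,
        hinter]
      exact hI
    exact this.comp_sub_right x0
  · rw [integral_sub_right_eq_self (fun x : E2 => (Ioi ρ).indicator (fun y : ℝ => y ^ s) ‖x‖) x0,
      integral_fun_norm_addHaar volume (fun y => (Ioi ρ).indicator (fun y : ℝ => y ^ s) y),
      setIntegral_congr_fun measurableSet_Ioi hcongr, setIntegral_indicator measurableSet_Ioi,
      inter_comm, hinter, integral_Ioi_rpow_of_lt (by linarith) hρ]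
    simp
    rw [show s + 1 + 1 = s + 2 by ring, show -2 + -s = -(s+2) by ring, div_neg]
    ring

lemma near_bound (s : ℝ) (hs : -2 < s) :
    ∃ N : ℝ, 0 < N ∧ ∀ (x0 : E2) (ρ A : ℝ) (F : E2 → ℝ), 0 < ρ →
      (∀ x, ‖x - x0‖ < ρ → |F x| ≤ A * ‖x - x0‖ ^ s) → (∀ x, ρ ≤ ‖x - x0‖ → F x = 0) →
      |∫ x, F x| ≤ N * A * ρ ^ (s + 2) := by
  obtain ⟨N, hN, h⟩ := radial_near s hs
  refine ⟨N, hN, fun x0 ρ A F hρ h1 h2 => ?_⟩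
  obtain ⟨hi, he⟩ := h x0 ρ hρ
  have := norm_integral_le_of_norm_le (f := F) (hi.const_mul A) (Filter.Eventually.of_forall
    fun x => by
      by_cases hx : ‖x - x0‖ < ρ
      · simpa [indicator, hx] using h1 x hx
      · simp [indicator, hx, h2 x (not_lt.1 hx)])
  rw [integral_const_mul, he] at this
  rw [Real.norm_eq_abs] at this
  linarith

lemma far_bound (s : ℝ) (hs : s < -2) :
    ∃ N : ℝ, 0 < N ∧ ∀ (x0 : E2) (ρ A : ℝ) (F : E2 → ℝ), 0 < ρ →
      (∀ x, ρ < ‖x - x0‖ → |F x| ≤ A * ‖x - x0‖ ^ s) → (∀ x, ‖x - x0‖ ≤ ρ → F x = 0) →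
      |∫ x, F x| ≤ N * A * ρ ^ (s + 2) := by
  obtain ⟨N, hN, h⟩ := radial_far s hs
  refine ⟨N, hN, fun x0 ρ A F hρ h1 h2 => ?_⟩
  obtain ⟨hi, he⟩ := h x0 ρ hρ
  have := norm_integral_le_of_norm_le (f := F) (hi.const_mul A) (Filter.Eventually.of_forall
    fun x => by
      by_cases hx : ρ < ‖x - x0‖
      · simpa [indicator, hx] using h1 x hx
      · simp [indicator, hx, h2 x (not_lt.1 hx)])
  rw [integral_const_mul, he] at this
  rw [Real.norm_eq_abs] at this
  linarith

lemma cutoff_exists : ∃ L : ℝ, 0 < L ∧ ∀ (x0 : E2) (ρ : ℝ), 0 < ρ → ∃ ψ : E2 → ℝ,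
    ContDiff ℝ 1 ψ ∧ HasCompactSupport ψ ∧ (∀ x, 0 ≤ ψ x) ∧ (∀ x, ψ x ≤ 1) ∧
    (∀ x, ‖x - x0‖ ≤ ρ → ψ x = 1) ∧ (∀ x, 2 * ρ ≤ ‖x - x0‖ → ψ x = 0) ∧
    (∀ x, ‖fderiv ℝ ψ x‖ ≤ L / ρ) ∧
    (∀ x, ‖x - x0‖ < ρ → fderiv ℝ ψ x = 0) ∧ (∀ x, 2 * ρ < ‖x - x0‖ → fderiv ℝ ψ x = 0) := by
  let χ : ContDiffBump (0 : E2) := ⟨1, 2, one_pos, one_lt_two⟩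
  have hχ : ContDiff ℝ 1 χ := χ.contDiff
  obtain ⟨L, hL⟩ := (hχ.continuous_fderiv one_ne_zero).bounded_above_of_compact_support
    (χ.hasCompactSupport.fderiv ℝ)
  refine ⟨max L 1, by positivity, fun x0 ρ hρ => ?_⟩
  have hsub : ∀ x, ‖ρ⁻¹ • (x - x0)‖ = ‖x - x0‖ / ρ := fun x => by
    rw [norm_smul, norm_inv, Real.norm_of_nonneg hρ.le]; ring
  have h1 : ∀ x, ‖x - x0‖ ≤ ρ → χ (ρ⁻¹ • (x - x0)) = 1 := fun x hx => by
    apply χ.one_of_mem_closedBall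
    rw [mem_closedBall_zero_iff, hsub, div_le_iff₀ hρ]
    simpa [χ] using hx
  have h0 : ∀ x, 2 * ρ ≤ ‖x - x0‖ → χ (ρ⁻¹ • (x - x0)) = 0 := fun x hx => by
    apply χ.zero_of_le_dist
    rw [dist_zero_right, hsub, le_div_iff₀ hρ]
    simpa [χ] using hx
  have hc : Continuous fun x : E2 => ‖x - x0‖ := by fun_prop
  refine ⟨fun x => χ (ρ⁻¹ • (x - x0)), ?_, ?_, fun x => χ.nonneg, fun x => χ.le_one, h1, h0, ?_,
    ?_, ?_⟩
  · exact hχ.comp (by fun_prop)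
  · refine HasCompactSupport.of_support_subset_isCompact (isCompact_closedBall x0 (2 * ρ)) ?_
    intro x hx
    by_contra h
    apply hx
    apply h0
    rw [mem_closedBall_iff_norm, not_le] at h
    exact h.le
  · intro x
    have hd : HasFDerivAt (fun x : E2 => ρ⁻¹ • (x - x0)) (ρ⁻¹ • ContinuousLinearMap.id ℝ E2) x :=
      ((hasFDerivAt_id x).sub_const x0).const_smul ρ⁻¹
    have := ((hχ.differentiable one_ne_zero) (ρ⁻¹ • (x - x0))).hasFDerivAt.comp x hd
    have h2 := this.fderiv
    simp only [Function.comp_def] at h2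
    rw [h2]
    simp only [ContinuousLinearMap.comp_smul, ContinuousLinearMap.comp_id, norm_smul, norm_inv,
      Real.norm_of_nonneg hρ.le]
    rw [div_eq_inv_mul]
    gcongr
    exact (hL _).trans (le_max_left _ _)
  · intro x hx
    have : (fun x => χ (ρ⁻¹ • (x - x0))) =ᶠ[nhds x] fun _ => (1 : ℝ) := by
      filter_upwards [(isOpen_lt hc continuous_const).mem_nhds hx] with y hy
      exact h1 y (le_of_lt hy)
    rw [this.fderiv_eq]; simp
  · intro x hx
    have : (fun x => χ (ρ⁻¹ • (x - x0))) =ᶠ[nhds x] fun _ => (0 : ℝ) := by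
      filter_upwards [(isOpen_lt continuous_const hc).mem_nhds hx] with y hy
      exact h0 y (le_of_lt hy)
    rw [this.fderiv_eq]; simp

/-- Integration by parts against a compactly supported C¹ function. -/
lemma ibp_compact (a g : E2 → ℝ) (ha : ContDiff ℝ 1 a) (hg : ContDiff ℝ 1 g)
    (hgc : HasCompactSupport g) (v : E2) :
    ∫ x, a x * fderiv ℝ g x v = - ∫ x, fderiv ℝ a x v * g x := by
  have ha' : Continuous fun x => fderiv ℝ a x v :=
    (ha.continuous_fderiv one_ne_zero).clm_apply continuous_const
  have hg' : Continuous fun x => fderiv ℝ g x v :=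
    (hg.continuous_fderiv one_ne_zero).clm_apply continuous_const
  apply integral_mul_fderiv_eq_neg_fderiv_mul_of_integrable
  · exact (ha'.mul hg.continuous).integrable_of_hasCompactSupport hgc.mul_left
  · exact (ha.continuous.mul hg').integrable_of_hasCompactSupport (hgc.fderiv_apply ℝ v).mul_left
  · exact (ha.continuous.mul hg.continuous).integrable_of_hasCompactSupport hgc.mul_left
  · exact fun x _ => ha.differentiable one_ne_zero x
  · exact fun x _ => hg.differentiable one_ne_zero x

lemma core_estimate (κ : ℝ) (hκ : κ ∈ Ioo (0 : ℝ) 1) :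
    ∃ C : ℝ, 0 < C ∧ ∀ (θ θ' v : E2) (r M K : ℝ) (a b h : E2 → ℝ), 0 < r → ‖θ - θ'‖ = r →
      0 ≤ M → 0 ≤ K → ‖v‖ ≤ 1 → ContDiff ℝ 1 a → ContDiff ℝ 1 b →
      (∀ η, |b η| ≤ M / ‖η - θ'‖) →
      (∀ η, ‖fderiv ℝ a η‖ ≤ M / ‖η - θ‖ ^ 2) →
      (∀ η, ‖fderiv ℝ b η‖ ≤ M / ‖η - θ'‖ ^ 2) →
      (∀ η, 2 * r ≤ ‖η - θ‖ → |a η - b η| ≤ M * r / ‖η - θ‖ ^ 2) →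
      (∀ η, 2 * r ≤ ‖η - θ‖ → ‖fderiv ℝ a η - fderiv ℝ b η‖ ≤ M * r / ‖η - θ‖ ^ 3) →
      ContDiff ℝ 1 h → HasCompactSupport h → (∀ x y, |h x - h y| ≤ K * ‖x - y‖ ^ κ) →
      |(∫ η, a η * fderiv ℝ h η v) - ∫ η, b η * fderiv ℝ h η v| ≤ C * M * K * r ^ κ := by
  obtain ⟨hκ0, hκ1⟩ := hκ
  obtain ⟨N1, hN1, near1⟩ := near_bound (κ - 2) (by linarith)
  obtain ⟨N2, hN2, far2⟩ := far_bound (κ - 3) (by linarith)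
  obtain ⟨N3, hN3, near3⟩ := near_bound (-1) (by norm_num)
  obtain ⟨N0, hN0, near0⟩ := near_bound 0 (by norm_num)
  obtain ⟨L, hL, cutoff⟩ := cutoff_exists
  refine ⟨N2 * 2 ^ (κ - 1) + N1 * 4 ^ κ + N1 * 5 ^ κ + 3 * N3 * L, by positivity, ?_⟩
  intro θ θ' v r M K a b h hr hθ hM hK hv ha hb hb0 ha1 hb1 hw0 hw1 hh hhc hhol
  have da := ha.differentiable one_ne_zero
  have db := hb.differentiable one_ne_zero
  have dh := hh.differentiable one_ne_zero
  have clm : ∀ (T : E2 →L[ℝ] ℝ), |T v| ≤ ‖T‖ := fun T =>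
    (T.le_opNorm v).trans (mul_le_of_le_one_right (norm_nonneg _) hv)
  have ca' : Continuous fun x => fderiv ℝ a x v :=
    (ha.continuous_fderiv one_ne_zero).clm_apply continuous_const
  have cb' : Continuous fun x => fderiv ℝ b x v :=
    (hb.continuous_fderiv one_ne_zero).clm_apply continuous_const
  have ch' : Continuous fun x => fderiv ℝ h x v :=
    (hh.continuous_fderiv one_ne_zero).clm_apply continuous_const
  set c : ℝ := h θ with hc
  obtain ⟨ψ, ψC, ψc, ψ0, ψ1, ψeq1, ψeq0, ψd, -, ψdout⟩ := cutoff θ (2 * r) (by positivity)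
  have dψ := ψC.differentiable one_ne_zero
  have cψ' : Continuous fun x => fderiv ℝ ψ x v :=
    (ψC.continuous_fderiv one_ne_zero).clm_apply continuous_const
  obtain ⟨R0, hR0⟩ := hhc.isCompact.isBounded.subset_closedBall θ
  have hsupp : ∀ x, R0 < ‖x - θ‖ → h x = 0 := by
    intro x hx
    by_contra hne
    have := hR0 (subset_tsupport _ hne)
    rw [mem_closedBall_iff_norm] at this
    linarith
  have tri : ∀ η, ‖η - θ'‖ ≤ ‖η - θ‖ + r := fun η => by
    rw [← hθ]; exact norm_sub_le_norm_sub_add_norm_sub _ _ _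
  have key : ∀ R : ℝ, max R0 (4 * r) ≤ R →
      |(∫ η, a η * fderiv ℝ h η v) - ∫ η, b η * fderiv ℝ h η v| ≤
      (N2 * 2 ^ (κ - 1) + N1 * 4 ^ κ + N1 * 5 ^ κ + 3 * N3 * L) * M * K * r ^ κ
        + (|c| * (N0 * (M * r * L) * 9)) / R := by
    intro R hR
    have hRR0 : R0 ≤ R := (le_max_left _ _).trans hR
    have hRr : 4 * r ≤ R := (le_max_right _ _).trans hR
    have hRpos : 0 < R := by linarith
    obtain ⟨Ψ, ΨC, Ψc, Ψ0, Ψ1, Ψeq1, Ψeq0, Ψd, Ψdin, Ψdout⟩ := cutoff θ R hRpos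
    have dΨ := ΨC.differentiable one_ne_zero
    have cΨ' : Continuous fun x => fderiv ℝ Ψ x v :=
      (ΨC.continuous_fderiv one_ne_zero).clm_apply continuous_const
    let g : E2 → ℝ := fun x => Ψ x * (h x - c)
    have gC : ContDiff ℝ 1 g := ΨC.mul (hh.sub contDiff_const)
    have gc : HasCompactSupport g := Ψc.mul_right
    have dg := gC.differentiable one_ne_zero
    have cg' : Continuous fun x => fderiv ℝ g x v :=
      (gC.continuous_fderiv one_ne_zero).clm_apply continuous_const
    have hgsum : h = fun x => g x + c * Ψ x := by
      funext x
      simp only [g]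
      by_cases hx : ‖x - θ‖ ≤ R
      · rw [Ψeq1 x hx]; ring
      · rw [hsupp x (by linarith [not_le.1 hx])]; ring
    have hder : ∀ x, fderiv ℝ h x v = fderiv ℝ g x v + c * fderiv ℝ Ψ x v := by
      intro x
      have := ((dg x).hasFDerivAt.add ((dΨ x).hasFDerivAt.const_mul c))
      have h2 : HasFDerivAt h (fderiv ℝ g x + c • fderiv ℝ Ψ x) x := by
        rw [hgsum]; exact this
      rw [h2.fderiv]; simp
    have gbd : ∀ x, |g x| ≤ K * ‖x - θ‖ ^ κ := by
      intro x
      simp only [g]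
      rw [abs_mul, abs_of_nonneg (Ψ0 x)]
      exact (mul_le_of_le_one_left (abs_nonneg _) (Ψ1 x)).trans (hhol x θ)
    have gθ' : g θ' = h θ' - c := by
      simp only [g]
      rw [Ψeq1 θ' (by rw [norm_sub_rev, hθ]; linarith), one_mul]
    let w : E2 → ℝ := fun x => a x - b x
    have wC : ContDiff ℝ 1 w := ha.sub hb
    have wd : ∀ x, fderiv ℝ w x = fderiv ℝ a x - fderiv ℝ b x := fun x =>
      fderiv_fun_sub (da x) (db x)
    have icomp : ∀ {p q : E2 → ℝ}, Continuous p → Continuous q → HasCompactSupport q →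
        Integrable (fun x => p x * q x) := fun hp hq hqc =>
      (hp.mul hq).integrable_of_hasCompactSupport hqc.mul_left
    -- step 1
    have e1 : (∫ η, a η * fderiv ℝ h η v) - ∫ η, b η * fderiv ℝ h η v =
        (∫ η, w η * fderiv ℝ g η v) + c * ∫ η, w η * fderiv ℝ Ψ η v := by
      rw [← integral_sub (icomp ha.continuous ch' (hhc.fderiv_apply ℝ v))
        (icomp hb.continuous ch' (hhc.fderiv_apply ℝ v)), ← integral_const_mul, ← integral_add
        (icomp wC.continuous cg' (gc.fderiv_apply ℝ v))
        ((icomp wC.continuous cΨ' (Ψc.fderiv_apply ℝ v)).const_mul c)]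
      congr 1; funext x
      rw [hder x]; simp only [w]; ring
    have e2 := ibp_compact w g wC gC gc v
    let F1 : E2 → ℝ := fun x => ((1 - ψ x) * fderiv ℝ w x v) * g x
    let F2 : E2 → ℝ := fun x => (fderiv ℝ a x v * g x) * ψ x
    let F3 : E2 → ℝ := fun x => (fderiv ℝ b x v * (g x - g θ')) * ψ x
    have cw' : Continuous fun x => fderiv ℝ w x v :=
      (wC.continuous_fderiv one_ne_zero).clm_apply continuous_const
    have i1 : Integrable F1 :=
      icomp ((continuous_const.sub ψC.continuous).mul cw') gC.continuous gc
    have i2 : Integrable F2 := icomp (ca'.mul gC.continuous) ψC.continuous ψc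
    have i3 : Integrable F3 :=
      icomp (cb'.mul (gC.continuous.sub continuous_const)) ψC.continuous ψc
    have i4 : Integrable (fun x => fderiv ℝ b x v * ψ x) := icomp cb' ψC.continuous ψc
    have e3 : ∫ x, fderiv ℝ w x v * g x =
        (∫ x, F1 x) + (∫ x, F2 x) - (∫ x, F3 x) - g θ' * ∫ x, fderiv ℝ b x v * ψ x := by
      have i12 : Integrable (fun x => F1 x + F2 x) := i1.add i2
      have i123 : Integrable (fun x => F1 x + F2 x - F3 x) := i12.sub i3
      rw [← integral_const_mul, ← integral_add i1 i2, ← integral_sub i12 i3,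
        ← integral_sub i123 (i4.const_mul _)]
      congr 1; funext x
      simp only [F1, F2, F3, wd x, ContinuousLinearMap.sub_apply]
      ring
    have e4 := ibp_compact b ψ hb ψC ψc v
    have t1 : |∫ x, F1 x| ≤ N2 * (M * r * K) * (2 * r) ^ (κ - 3 + 2) := by
      apply far2 θ (2 * r) _ F1 (by positivity)
      · intro x hx
        have hx0 : 0 < ‖x - θ‖ := by linarith
        simp only [F1, abs_mul]
        have u1 : |1 - ψ x| ≤ 1 := by rw [abs_le]; constructor <;> linarith [ψ0 x, ψ1 x]
        have u2 : |fderiv ℝ w x v| ≤ M * r / ‖x - θ‖ ^ 3 :=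
          (clm _).trans (by rw [wd]; exact hw1 x hx.le)
        calc |1 - ψ x| * |fderiv ℝ w x v| * |g x|
            ≤ 1 * (M * r / ‖x - θ‖ ^ 3) * (K * ‖x - θ‖ ^ κ) := by
              gcongr
              exact gbd x
          _ = M * r * K * ‖x - θ‖ ^ (κ - 3) := by
              rw [show κ - 3 = κ - (3 : ℕ) by norm_num, Real.rpow_sub_natCast hx0.ne']
              ring
      · intro x hx
        simp [F1, ψeq1 x hx]
    have t2 : |∫ x, F2 x| ≤ N1 * (M * K) * (4 * r) ^ (κ - 2 + 2) := by
      apply near1 θ (4 * r) _ F2 (by positivity)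
      · intro x hx
        simp only [F2, abs_mul, abs_of_nonneg (ψ0 x)]
        rcases (norm_nonneg (x - θ)).eq_or_lt with h0 | hx0
        · have : |fderiv ℝ a x v| ≤ 0 := (clm _).trans ((ha1 x).trans (by simp [← h0]))
          have : |fderiv ℝ a x v| = 0 := le_antisymm this (abs_nonneg _)
          rw [this]
          simp only [zero_mul]
          positivity
        calc |fderiv ℝ a x v| * |g x| * ψ x
            ≤ (M / ‖x - θ‖ ^ 2) * (K * ‖x - θ‖ ^ κ) * 1 := by
              gcongr
              · exact ψ0 x
              · exact (clm _).trans (ha1 x)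
              · exact gbd x
              · exact ψ1 x
          _ = M * K * ‖x - θ‖ ^ (κ - 2) := by
              rw [show κ - 2 = κ - (2 : ℕ) by norm_num, Real.rpow_sub_natCast hx0.ne']
              ring
      · intro x hx
        simp [F2, ψeq0 x (by linarith)]
    have t3 : |∫ x, F3 x| ≤ N1 * (M * K) * (5 * r) ^ (κ - 2 + 2) := by
      apply near1 θ' (5 * r) _ F3 (by positivity)
      · intro x hx
        by_cases hx4 : 4 * r ≤ ‖x - θ‖
        · simp only [F3, ψeq0 x (by linarith), mul_zero, abs_zero]
          positivity
        push Not at hx4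
        simp only [F3, abs_mul, abs_of_nonneg (ψ0 x)]
        have hgg : |g x - g θ'| ≤ K * ‖x - θ'‖ ^ κ := by
          rw [gθ']
          simp only [g]
          rw [Ψeq1 x (by linarith), one_mul, sub_sub_sub_cancel_right]
          exact hhol x θ'
        rcases (norm_nonneg (x - θ')).eq_or_lt with h0 | hx0
        · have : |fderiv ℝ b x v| ≤ 0 := (clm _).trans ((hb1 x).trans (by simp [← h0]))
          have : |fderiv ℝ b x v| = 0 := le_antisymm this (abs_nonneg _)
          rw [this]
          simp only [zero_mul]
          positivity
        calc |fderiv ℝ b x v| * |g x - g θ'| * ψ x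
            ≤ (M / ‖x - θ'‖ ^ 2) * (K * ‖x - θ'‖ ^ κ) * 1 := by
              gcongr
              · exact ψ0 x
              · exact (clm _).trans (hb1 x)
              · exact ψ1 x
          _ = M * K * ‖x - θ'‖ ^ (κ - 2) := by
              rw [show κ - 2 = κ - (2 : ℕ) by norm_num, Real.rpow_sub_natCast hx0.ne']
              ring
      · intro x hx
        simp [F3, ψeq0 x (by linarith [tri x])]
    have t4 : |∫ x, b x * fderiv ℝ ψ x v| ≤ N3 * (M * L / (2 * r)) * (6 * r) ^ (-1 + 2 : ℝ) := by
      apply near3 θ' (6 * r) _ _ (by positivity)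
      · intro x hx
        rw [abs_mul, Real.rpow_neg_one]
        calc |b x| * |fderiv ℝ ψ x v| ≤ (M / ‖x - θ'‖) * (L / (2 * r)) := by
              gcongr
              · exact hb0 x
              · exact (clm _).trans (ψd x)
          _ = _ := by ring
      · intro x hx
        rw [ψdout x (by linarith [tri x])]; simp
    have t5 : |∫ x, w x * fderiv ℝ Ψ x v| ≤ N0 * (M * r * L / R ^ 3) * (3 * R) ^ (0 + 2 : ℝ) := by
      apply near0 θ (3 * R) _ _ (by positivity)
      · intro x hx
        rw [Real.rpow_zero, mul_one]
        by_cases hxR : ‖x - θ‖ < R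
        · rw [Ψdin x hxR]; simp; positivity
        push Not at hxR
        rw [abs_mul]
        calc |w x| * |fderiv ℝ Ψ x v| ≤ (M * r / ‖x - θ‖ ^ 2) * (L / R) := by
              gcongr
              · exact hw0 x (by linarith)
              · exact (clm _).trans (Ψd x)
          _ ≤ (M * r / R ^ 2) * (L / R) := by gcongr
          _ = _ := by field_simp
      · intro x hx
        rw [Ψdout x (by linarith)]; simp
    have t6 : |g θ'| ≤ K * r ^ κ := by
      have := gbd θ'
      rwa [norm_sub_rev, hθ] at this
    rw [show κ - 3 + 2 = κ - 1 by ring, Real.mul_rpow (by norm_num) hr.le,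
      Real.rpow_sub_one hr.ne' κ] at t1
    rw [show κ - 2 + 2 = κ by ring, Real.mul_rpow (by norm_num) hr.le] at t2 t3
    rw [show (-1 + 2 : ℝ) = 1 by norm_num, Real.rpow_one] at t4
    rw [show (0 + 2 : ℝ) = (2 : ℕ) by norm_num, Real.rpow_natCast] at t5
    have t1' : |∫ x, F1 x| ≤ N2 * 2 ^ (κ - 1) * M * K * r ^ κ := by
      refine t1.trans (le_of_eq ?_)
      field_simp
    have t4' : |g θ' * ∫ x, b x * fderiv ℝ ψ x v| ≤ 3 * N3 * L * M * K * r ^ κ := by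
      rw [abs_mul]
      refine (mul_le_mul t6 t4 (abs_nonneg _) (by positivity)).trans (le_of_eq ?_)
      field_simp
      ring
    have t5' : |c * ∫ x, w x * fderiv ℝ Ψ x v| ≤ (|c| * (N0 * (M * r * L) * 9)) / R := by
      rw [abs_mul]
      refine (mul_le_mul_of_nonneg_left t5 (abs_nonneg c)).trans (le_of_eq ?_)
      field_simp
      ring
    have e4' : ∫ x, fderiv ℝ b x v * ψ x = - ∫ x, b x * fderiv ℝ ψ x v := by rw [e4]; ring
    rw [e1, e2, e3, e4']
    have A1 := abs_le.1 t1'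
    have A2 := abs_le.1 t2
    have A3 := abs_le.1 t3
    have A4 := abs_le.1 t4'
    have A5 := abs_le.1 t5'
    rw [abs_le]
    constructor
    · linarith [A1.1, A1.2, A2.1, A2.2, A3.1, A3.2, A4.1, A4.2, A5.1, A5.2]
    · linarith [A1.1, A1.2, A2.1, A2.2, A3.1, A3.2, A4.1, A4.2, A5.1, A5.2]
  have lim : Filter.Tendsto (fun R : ℝ =>
      (N2 * 2 ^ (κ - 1) + N1 * 4 ^ κ + N1 * 5 ^ κ + 3 * N3 * L) * M * K * r ^ κ
        + (|c| * (N0 * (M * r * L) * 9)) / R) Filter.atTop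
      (nhds ((N2 * 2 ^ (κ - 1) + N1 * 4 ^ κ + N1 * 5 ^ κ + 3 * N3 * L) * M * K * r ^ κ + 0)) :=
    tendsto_const_nhds.add (tendsto_const_nhds.div_atTop Filter.tendsto_id)
  rw [add_zero] at lim
  exact ge_of_tendsto lim (Filter.eventually_atTop.2 ⟨_, key⟩)

lemma reg_kernel : ∃ L : ℝ, 0 < L ∧ ∀ (θ : E2) (p : E2 → ℝ) (CG ε : ℝ), 0 ≤ CG → 0 < ε →
    ContDiffOn ℝ 1 p {θ}ᶜ → (∀ η, η ≠ θ → |p η| ≤ CG / ‖η - θ‖) →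
    (∀ η, η ≠ θ → ‖fderiv ℝ p η‖ ≤ CG / ‖η - θ‖ ^ 2) →
    ∃ a : E2 → ℝ, ContDiff ℝ 1 a ∧ (∀ η, |a η| ≤ CG / ‖η - θ‖) ∧
      (∀ η, ‖fderiv ℝ a η‖ ≤ (1 + 2 * L) * CG / ‖η - θ‖ ^ 2) ∧
      (∀ η, 2 * ε < ‖η - θ‖ → a η = p η ∧ fderiv ℝ a η = fderiv ℝ p η) := by
  obtain ⟨L, hL, cutoff⟩ := cutoff_exists
  refine ⟨L, hL, fun θ p CG ε hCG hε hp hp0 hp1 => ?_⟩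
  obtain ⟨ψ, ψC, ψc, ψ0, ψ1, ψeq1, ψeq0, ψd, -, ψdout⟩ := cutoff θ ε hε
  have hc : Continuous fun x : E2 => ‖x - θ‖ := by fun_prop
  have dψ := ψC.differentiable one_ne_zero
  have pat : ∀ η, η ≠ θ → ContDiffAt ℝ 1 p η := fun η hη =>
    hp.contDiffAt (isOpen_compl_singleton.mem_nhds hη)
  have zero_near : (fun η => (1 - ψ η) * p η) =ᶠ[nhds θ] fun _ => (0 : ℝ) := by
    filter_upwards [(isOpen_lt hc continuous_const).mem_nhds
      (show ‖θ - θ‖ < ε by simpa using hε)] with y hy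
    rw [ψeq1 y (le_of_lt hy)]; ring
  refine ⟨fun η => (1 - ψ η) * p η, ?_, ?_, ?_, ?_⟩
  · rw [contDiff_iff_contDiffAt]
    intro η
    by_cases hη : η = θ
    · subst hη
      exact contDiffAt_const.congr_of_eventuallyEq zero_near
    · exact (contDiffAt_const.sub ψC.contDiffAt).mul (pat η hη)
  · intro η
    by_cases hη : η = θ
    · subst hη
      simp [ψeq1 η (by simpa using hε.le)]
    · rw [abs_mul]
      have u1 : |1 - ψ η| ≤ 1 := by rw [abs_le]; constructor <;> linarith [ψ0 η, ψ1 η]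
      exact (mul_le_of_le_one_left (abs_nonneg _) u1).trans (hp0 η hη)
  · intro η
    by_cases hη : η = θ
    · subst hη
      rw [zero_near.fderiv_eq]
      simp
    · have hpos : 0 < ‖η - θ‖ := norm_pos_iff.2 (sub_ne_zero.2 hη)
      have hd := (((dψ η).hasFDerivAt.const_sub 1).mul
        ((pat η hη).differentiableAt one_ne_zero).hasFDerivAt)
      have hd2 : fderiv ℝ (fun η => (1 - ψ η) * p η) η = _ := hd.fderiv
      rw [hd2]
      have u1 : |1 - ψ η| ≤ 1 := by rw [abs_le]; constructor <;> linarith [ψ0 η, ψ1 η]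
      have u2 : ‖fderiv ℝ ψ η‖ ≤ 2 * L / ‖η - θ‖ := by
        by_cases hx : 2 * ε < ‖η - θ‖
        · rw [ψdout η hx, norm_zero]; positivity
        · push Not at hx
          refine (ψd η).trans ?_
          rw [div_le_div_iff₀ hε hpos]
          nlinarith
      refine (norm_add_le _ _).trans ?_
      rw [norm_smul, norm_smul, norm_neg, Real.norm_eq_abs, Real.norm_eq_abs]
      calc |1 - ψ η| * ‖fderiv ℝ p η‖ + |p η| * ‖fderiv ℝ ψ η‖
          ≤ 1 * (CG / ‖η - θ‖ ^ 2) + (CG / ‖η - θ‖) * (2 * L / ‖η - θ‖) := by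
            gcongr
            · exact hp1 η hη
            · exact hp0 η hη
        _ = _ := by field_simp
  · intro η hη
    have : (fun η => (1 - ψ η) * p η) =ᶠ[nhds η] p := by
      filter_upwards [(isOpen_lt continuous_const hc).mem_nhds hη] with y hy
      rw [ψeq0 y (le_of_lt hy)]; ring
    exact ⟨this.eq_of_nhds, this.fderiv_eq⟩

/-- Convergence of the regularised integrals. -/
lemma reg_tendsto (θ : E2) (p q : E2 → ℝ) (a : ℕ → E2 → ℝ) (CG : ℝ) (ε : ℕ → ℝ)
    (hCG : 0 ≤ CG)
    (hε : Filter.Tendsto ε Filter.atTop (nhds 0)) (hq : Continuous q) (hqc : HasCompactSupport q)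
    (ha : ∀ n, Continuous (a n)) (hb : ∀ n η, |a n η| ≤ CG / ‖η - θ‖)
    (heq : ∀ n η, 2 * ε n < ‖η - θ‖ → a n η = p η) :
    Filter.Tendsto (fun n => ∫ η, a n η * q η) Filter.atTop (nhds (∫ η, p η * q η)) := by
  obtain ⟨D, hD⟩ := hq.bounded_above_of_compact_support hqc
  have hD0 : 0 ≤ D := (norm_nonneg _).trans (hD 0)
  obtain ⟨R0, hR0⟩ := hqc.isCompact.isBounded.subset_closedBall θ
  obtain ⟨N, -, hN⟩ := radial_near (-1) (by norm_num)
  have hint := (hN θ (max R0 0 + 1) (by positivity)).1.const_mul (CG * D)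
  refine tendsto_integral_of_dominated_convergence _
    (fun n => ((ha n).mul hq).aestronglyMeasurable) hint ?_ ?_
  · intro n
    refine Filter.Eventually.of_forall fun x => ?_
    by_cases hx : ‖x - θ‖ < max R0 0 + 1
    · simp only [indicator, mem_Iio, hx, if_true, norm_mul, Real.rpow_neg_one]
      calc ‖a n x‖ * ‖q x‖ ≤ (CG / ‖x - θ‖) * D := by
            gcongr
            · exact hb n x
            · exact hD x
        _ = _ := by ring
    · have : q x = 0 := by
        by_contra hne
        have := hR0 (subset_tsupport _ hne)
        rw [mem_closedBall_iff_norm] at this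
        exact hx (by linarith [le_max_left R0 0])
      simp [indicator, this, hx]
  · have : ∀ᵐ x : E2, x ≠ θ := by
      rw [ae_iff]; simp
    filter_upwards [this] with x hx
    have hpos : 0 < ‖x - θ‖ := norm_pos_iff.2 (sub_ne_zero.2 hx)
    have h2 : Filter.Tendsto (fun n => 2 * ε n) Filter.atTop (nhds 0) := by
      simpa using hε.const_mul 2
    refine tendsto_const_nhds.congr' ?_
    filter_upwards [h2.eventually (gt_mem_nhds hpos)] with n hn
    rw [heq n x hn]

lemma scalar_bound (κ : ℝ) (hκ : κ ∈ Ioo (0 : ℝ) 1) :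
    ∃ C : ℝ, 0 < C ∧
      ∀ (CG : ℝ) (G : E2 → E2 → ℝ),
        0 ≤ CG →
        (∀ η, ContDiffOn ℝ 1 (fun θ => G θ η) {η}ᶜ) →
        (∀ θ, ContDiffOn ℝ 1 (fun η => G θ η) {θ}ᶜ) →
        (∀ η, DifferentiableOn ℝ
          (fun θ => fderiv ℝ (fun η' => G θ η') η) {η}ᶜ) →
        (∀ θ η, θ ≠ η →
          |G θ η| +
            ‖θ - η‖ * (‖fderiv ℝ (fun θ' => G θ' η) θ‖ + ‖fderiv ℝ (fun η' => G θ η') η‖) +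
            ‖θ - η‖ ^ 2 * ‖fderiv ℝ (fun θ' => fderiv ℝ (fun η' => G θ' η') η) θ‖ ≤
          CG / ‖θ - η‖) →
        ∀ (h : E2 → ℝ) (v : E2), ‖v‖ ≤ 1 →
          ContDiff ℝ 1 h → HasCompactSupport h →
          ∀ K : ℝ, 0 ≤ K → (∀ x y, |h x - h y| ≤ K * ‖x - y‖ ^ κ) →
          ∀ θ θ' : E2, θ ≠ θ' →
            |(∫ η, G θ η * fderiv ℝ h η v) - (∫ η, G θ' η * fderiv ℝ h η v)| ≤
              C * CG * K * ‖θ - θ'‖ ^ κ := by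
  obtain ⟨C, hC, core⟩ := core_estimate κ hκ
  obtain ⟨L, hL, reg⟩ := reg_kernel
  refine ⟨C * (8 + 2 * L), by positivity, ?_⟩
  intro CG G hCG hG1 hG2 hG3 hbd h v hv hh hhc K hK hhol θ θ' hne
  set r := ‖θ - θ'‖ with hr
  have hr0 : 0 < r := norm_pos_iff.2 (sub_ne_zero.2 hne)
  have b0 : ∀ θ η, η ≠ θ → |G θ η| ≤ CG / ‖η - θ‖ := by
    intro θ η hη
    have := hbd θ η hη.symm
    rw [norm_sub_rev η θ]
    refine le_trans ?_ this
    rw [add_assoc]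
    exact le_add_of_nonneg_right (by positivity)
  have b12 : ∀ θ η, η ≠ θ → ‖fderiv ℝ (fun θ' => G θ' η) θ‖ ≤ CG / ‖η - θ‖ ^ 2 ∧
      ‖fderiv ℝ (fun η' => G θ η') η‖ ≤ CG / ‖η - θ‖ ^ 2 ∧
      ‖fderiv ℝ (fun θ' => fderiv ℝ (fun η' => G θ' η') η) θ‖ ≤ CG / ‖η - θ‖ ^ 3 := by
    intro θ η hη
    have := hbd θ η hη.symm
    have hpos : 0 < ‖η - θ‖ := norm_pos_iff.2 (sub_ne_zero.2 hη)
    rw [norm_sub_rev θ η, le_div_iff₀ hpos] at this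
    set d := ‖η - θ‖
    have n0 := abs_nonneg (G θ η)
    have n1 := norm_nonneg (fderiv ℝ (fun θ' => G θ' η) θ)
    have n2 := norm_nonneg (fderiv ℝ (fun η' => G θ η') η)
    have n3 := norm_nonneg (fderiv ℝ (fun θ' => fderiv ℝ (fun η' => G θ' η') η) θ)
    have m0 := mul_nonneg n0 hpos.le
    have m1 := mul_nonneg n1 (sq_nonneg d)
    have m2 := mul_nonneg n2 (sq_nonneg d)
    have m3 := mul_nonneg n3 (pow_nonneg hpos.le 3)
    refine ⟨?_, ?_, ?_⟩ <;> rw [le_div_iff₀ (by positivity)] <;> linarith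
  -- far region
  have far : ∀ η, 2 * r ≤ ‖η - θ‖ → ∀ ξ ∈ segment ℝ θ θ', η ≠ ξ ∧ ‖η - θ‖ / 2 ≤ ‖η - ξ‖ := by
    intro η hη ξ hξ
    have h1 : ‖ξ - θ‖ ≤ r := by
      have := norm_sub_le_of_mem_segment hξ
      rwa [norm_sub_rev θ' θ] at this
    have h2 : ‖η - θ‖ ≤ ‖η - ξ‖ + ‖ξ - θ‖ := norm_sub_le_norm_sub_add_norm_sub _ _ _
    have h3 : ‖η - θ‖ / 2 ≤ ‖η - ξ‖ := by linarith
    refine ⟨?_, h3⟩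
    rintro rfl
    simp at h3
    linarith
  have w0 : ∀ η, 2 * r ≤ ‖η - θ‖ → |G θ η - G θ' η| ≤ 4 * CG * r / ‖η - θ‖ ^ 2 := by
    intro η hη
    have hpos : 0 < ‖η - θ‖ := by linarith
    have := Convex.norm_image_sub_le_of_norm_fderiv_le (𝕜 := ℝ) (f := fun θ => G θ η)
      (C := CG / (‖η - θ‖ / 2) ^ 2) (s := segment ℝ θ θ') (x := θ') (y := θ)
      (fun ξ hξ => (((hG1 η).contDiffAt (isOpen_compl_singleton.mem_nhds
        (far η hη ξ hξ).1.symm)).differentiableAt one_ne_zero))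
      (fun ξ hξ => (b12 ξ η (far η hη ξ hξ).1).1.trans (by
        have := (far η hη ξ hξ).2
        gcongr))
      (convex_segment _ _) (right_mem_segment _ _ _) (left_mem_segment _ _ _)
    refine this.trans (le_of_eq ?_)
    rw [← hr]; field_simp
    ring
  have w1 : ∀ η, 2 * r ≤ ‖η - θ‖ → ‖fderiv ℝ (fun η' => G θ η') η - fderiv ℝ (fun η' => G θ' η') η‖
      ≤ 8 * CG * r / ‖η - θ‖ ^ 3 := by
    intro η hη
    have hpos : 0 < ‖η - θ‖ := by linarith
    have := Convex.norm_image_sub_le_of_norm_fderiv_le (𝕜 := ℝ)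
      (f := fun θ => fderiv ℝ (fun η' => G θ η') η)
      (C := CG / (‖η - θ‖ / 2) ^ 3) (s := segment ℝ θ θ') (x := θ') (y := θ)
      (fun ξ hξ => (hG3 η).differentiableAt (isOpen_compl_singleton.mem_nhds
        (far η hη ξ hξ).1.symm))
      (fun ξ hξ => (b12 ξ η (far η hη ξ hξ).1).2.2.trans (by
        have := (far η hη ξ hξ).2
        gcongr))
      (convex_segment _ _) (right_mem_segment _ _ _) (left_mem_segment _ _ _)
    refine this.trans (le_of_eq ?_)
    rw [← hr]; field_simp
    ring
  let ε : ℕ → ℝ := fun n => (r / 4) * (1 / ((n : ℝ) + 1))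
  have hε0 : ∀ n, 0 < ε n := fun n => by positivity
  have hεr : ∀ n, 2 * ε n < r := fun n => by
    have : 1 / ((n : ℝ) + 1) ≤ 1 := by
      rw [div_le_one (by positivity)]; linarith [Nat.cast_nonneg (α := ℝ) n]
    have : ε n ≤ (r / 4) * 1 := by
      simp only [ε]; gcongr
    linarith
  have hεlim : Filter.Tendsto ε Filter.atTop (nhds 0) := by
    have := (tendsto_one_div_add_atTop_nhds_zero_nat (𝕜 := ℝ)).const_mul (r / 4)
    rwa [mul_zero] at this
  choose a aC a0 a1 aeq using fun n => reg θ (fun η => G θ η) CG (ε n) hCG (hε0 n) (hG2 θ) (b0 θ)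
    (fun η hη => (b12 θ η hη).2.1)
  choose b bC bb0 b1 beq using fun n => reg θ' (fun η => G θ' η) CG (ε n) hCG (hε0 n) (hG2 θ')
    (b0 θ') (fun η hη => (b12 θ' η hη).2.1)
  have ch' : Continuous fun x => fderiv ℝ h x v :=
    (hh.continuous_fderiv one_ne_zero).clm_apply continuous_const
  have hc' : HasCompactSupport fun x => fderiv ℝ h x v := hhc.fderiv_apply ℝ v
  have lim1 := reg_tendsto θ (fun η => G θ η) _ a CG ε hCG hεlim ch' hc'
    (fun n => (aC n).continuous) a0 (fun n η hη => (aeq n η hη).1)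
  have lim2 := reg_tendsto θ' (fun η => G θ' η) _ b CG ε hCG hεlim ch' hc'
    (fun n => (bC n).continuous) bb0 (fun n η hη => (beq n η hη).1)
  refine le_of_tendsto (lim1.sub lim2).abs (Filter.Eventually.of_forall fun n => ?_)
  have tri : ∀ η, 2 * r ≤ ‖η - θ‖ → 2 * ε n < ‖η - θ‖ ∧ 2 * ε n < ‖η - θ'‖ := fun η hη => by
    have := far η hη θ' (right_mem_segment _ _ _)
    have h2 : ‖η - θ‖ ≤ ‖η - θ'‖ + ‖θ' - θ‖ := norm_sub_le_norm_sub_add_norm_sub _ _ _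
    rw [norm_sub_rev θ' θ, ← hr] at h2
    have := hεr n
    constructor <;> linarith
  have := core θ θ' v r ((8 + 2 * L) * CG) K (a n) (b n) h hr0 rfl (by positivity) hK hv (aC n) (bC n)
    (fun η => (bb0 n η).trans (by gcongr; nlinarith))
    (fun η => (a1 n η).trans (by gcongr; norm_num))
    (fun η => (b1 n η).trans (by gcongr; norm_num))
    (fun η hη => by
      rw [(aeq n η (tri η hη).1).1, (beq n η (tri η hη).2).1]
      exact (w0 η hη).trans (by gcongr; linarith))
    (fun η hη => by
      rw [(aeq n η (tri η hη).1).2, (beq n η (tri η hη).2).2]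
      exact (w1 η hη).trans (by gcongr; linarith))
    hh hhc hhol
  refine this.trans (le_of_eq ?_)
  ring

/-- Integrability of the singular integrand. -/
lemma kernel_integrable (θ : E2) (p q : E2 → ℝ) (CG : ℝ) (hCG : 0 ≤ CG)
    (hp : ContDiffOn ℝ 1 p {θ}ᶜ) (hp0 : ∀ η, η ≠ θ → |p η| ≤ CG / ‖η - θ‖)
    (hq : Continuous q) (hqc : HasCompactSupport q) :
    Integrable (fun η => p η * q η) := by
  obtain ⟨D, hD⟩ := hq.bounded_above_of_compact_support hqc
  have hD0 : 0 ≤ D := (norm_nonneg _).trans (hD 0)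
  obtain ⟨R0, hR0⟩ := hqc.isCompact.isBounded.subset_closedBall θ
  obtain ⟨N, -, hN⟩ := radial_near (-1) (by norm_num)
  have hint := (hN θ (max R0 0 + 1) (by positivity)).1.const_mul (CG * D)
  have hmeas : AEStronglyMeasurable p volume := by
    have := hp.continuousOn.aestronglyMeasurable (μ := volume) (measurableSet_singleton θ).compl
    rwa [restrict_compl_singleton] at this
  refine hint.mono' (hmeas.mul hq.aestronglyMeasurable) ?_
  have : ∀ᵐ x : E2, x ≠ θ := by
    rw [ae_iff]; simp
  filter_upwards [this] with x hxne
  by_cases hx : ‖x - θ‖ < max R0 0 + 1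
  · simp only [indicator, mem_Iio, hx, if_true, norm_mul, Real.rpow_neg_one]
    calc ‖p x‖ * ‖q x‖ ≤ (CG / ‖x - θ‖) * D := by
          gcongr
          · exact hp0 x hxne
          · exact hD x
      _ = _ := by ring
  · have : q x = 0 := by
      by_contra hne
      have := hR0 (subset_tsupport _ hne)
      rw [mem_closedBall_iff_norm] at this
      exact hx (by linarith [le_max_left R0 0])
    simp [indicator, this, hx]

end HolderHelpers

/-- Hölder bound `[𝓜f]_{Ċ^κ} ≲ C_G [f]_{Ċ^κ}` for the non-convolution
singular integral operator `𝓜f(θ) = ∫ G(θ,η) div f(η) dη` with a Calderón–Zygmund-type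
kernel `G` on `ℝ²`. -/
theorem singular_integral_holder_bound
    (κ : ℝ) (hκ : κ ∈ Ioo (0 : ℝ) 1) :
    ∃ C : ℝ, 0 < C ∧
      ∀ (CG : ℝ) (G : EuclideanSpace ℝ (Fin 2) → EuclideanSpace ℝ (Fin 2) → ℝ),
        0 ≤ CG →
        -- continuously differentiable in each variable, off the diagonal
        (∀ η, ContDiffOn ℝ 1 (fun θ => G θ η) {η}ᶜ) →
        (∀ θ, ContDiffOn ℝ 1 (fun η => G θ η) {θ}ᶜ) →
        (∀ η, DifferentiableOn ℝ
          (fun θ => fderiv ℝ (fun η' => G θ η') η) {η}ᶜ) →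
        -- continuous mixed derivative ∇_θ∇_η G, off the diagonal
        ContinuousOn
          (fun p : EuclideanSpace ℝ (Fin 2) × EuclideanSpace ℝ (Fin 2) =>
            fderiv ℝ (fun θ => fderiv ℝ (fun η' => G θ η') p.2) p.1)
          {p : EuclideanSpace ℝ (Fin 2) × EuclideanSpace ℝ (Fin 2) | p.1 ≠ p.2} →
        -- kernel bounds
        (∀ θ η, θ ≠ η →
          |G θ η| +
            ‖θ - η‖ * (‖fderiv ℝ (fun θ' => G θ' η) θ‖ + ‖fderiv ℝ (fun η' => G θ η') η‖) +
            ‖θ - η‖ ^ 2 * ‖fderiv ℝ (fun θ' => fderiv ℝ (fun η' => G θ' η') η) θ‖ ≤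
          CG / ‖θ - η‖) →
        ∀ f : EuclideanSpace ℝ (Fin 2) → EuclideanSpace ℝ (Fin 2),
          ContDiff ℝ 1 f → HasCompactSupport f →
          ∀ K : ℝ, (∀ x y, ‖f x - f y‖ ≤ K * ‖x - y‖ ^ κ) →
          ∀ θ θ' : EuclideanSpace ℝ (Fin 2),
            |(∫ η, G θ η * ∑ i, fderiv ℝ f η (EuclideanSpace.single i 1) i) -
                (∫ η, G θ' η * ∑ i, fderiv ℝ f η (EuclideanSpace.single i 1) i)| ≤
              C * CG * K * ‖θ - θ'‖ ^ κ := by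
  obtain ⟨C, hC, main⟩ := scalar_bound κ hκ
  refine ⟨2 * C, by positivity, ?_⟩
  intro CG G hCG hG1 hG2 hG3 _ hbd f hf hfc K hK θ θ'
  have hK0 : 0 ≤ K := by
    have := (norm_nonneg _).trans (hK (EuclideanSpace.single 0 1) 0)
    simpa using this
  by_cases hne : θ = θ'
  · subst hne
    simp [Real.zero_rpow hκ.1.ne']
  have b0 : ∀ θ η, η ≠ θ → |G θ η| ≤ CG / ‖η - θ‖ := by
    intro θ η hη
    have := hbd θ η hη.symm
    rw [norm_sub_rev η θ]
    refine le_trans ?_ this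
    rw [add_assoc]
    exact le_add_of_nonneg_right (by positivity)
  have fC : ∀ i : Fin 2, ContDiff ℝ 1 (fun x => f x i) := fun i =>
    (EuclideanSpace.proj (𝕜 := ℝ) i).contDiff.comp hf
  have fc : ∀ i : Fin 2, HasCompactSupport (fun x => f x i) := fun i =>
    hfc.comp_left (g := fun y : EuclideanSpace ℝ (Fin 2) => y i) rfl
  have fd : ∀ (i : Fin 2) η v, fderiv ℝ (fun x => f x i) η v = fderiv ℝ f η v i := by
    intro i η v
    have := (EuclideanSpace.proj (𝕜 := ℝ) i).hasFDerivAt.comp η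
      (hf.differentiable one_ne_zero η).hasFDerivAt
    have h2 : fderiv ℝ (fun x => f x i) η = _ := this.fderiv
    rw [h2]; rfl
  have cont : ∀ i : Fin 2, Continuous fun η =>
      fderiv ℝ (fun x => f x i) η (EuclideanSpace.single i 1) := fun i =>
    ((fC i).continuous_fderiv one_ne_zero).clm_apply continuous_const
  have int : ∀ (θ : EuclideanSpace ℝ (Fin 2)) (i : Fin 2), Integrable (fun η => G θ η *
      fderiv ℝ (fun x => f x i) η (EuclideanSpace.single i 1)) := fun θ i =>
    kernel_integrable θ (fun η => G θ η) _ CG hCG (hG2 θ) (b0 θ) (cont i)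
      ((fc i).fderiv_apply ℝ _)
  have split : ∀ θ, ∫ η, G θ η * ∑ i, fderiv ℝ f η (EuclideanSpace.single i 1) i =
      ∑ i, ∫ η, G θ η * fderiv ℝ (fun x => f x i) η (EuclideanSpace.single i 1) := by
    intro θ
    rw [← integral_finsetSum _ (fun i _ => int θ i)]
    congr 1; funext η
    rw [Finset.mul_sum]
    simp only [fd]
  have bound : ∀ i : Fin 2, _ := fun i =>
    main CG G hCG hG1 hG2 hG3 hbd (fun x => f x i) (EuclideanSpace.single i 1) (by simp)
      (fC i) (fc i) K hK0 (fun x y => by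
        refine le_trans ?_ (hK x y)
        exact PiLp.norm_apply_le (f x - f y) i) θ θ' hne
  rw [split θ, split θ', ← Finset.sum_sub_distrib]
  refine (Finset.abs_sum_le_sum_abs _ _).trans ((Finset.sum_le_sum fun i _ => bound i).trans
    (le_of_eq ?_))
  simp
  ring
end
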